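/- Let n ≥ 2 and let A ⊂ ℝⁿ be a Borel set with dim A > n − 1. Then there is a Borel set B ⊂ ℝⁿ with dim B ≤ 2(n−1) − dim A such that for every x ∈ ℝⁿ \ B, H^{n-1}(π_x(A \ {x})) > 0, where π_x : ℝⁿ \ {x} → S^{n-1} is the radial projection π_x(y) = (y − x)/|y − x|. -/

import Mathlib

/-! The theorem says that a Borel set `A` of dimension greater than `d = n - 1` has an exceptional
set `E`, the set of points which see `A` in an `H^d`-null set of directions, of dimension at most
`2 d - dim A`. A Borel hull of `E` of the same dimension (`exists_borel_hull`) then serves as `B`.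

Suppose that `s < dim A` and `t < dim E` with `s + t > 2 d`, where `s > d` and `t < d`. After
localization, `A` and `E` are separated in some coordinate `i₀`, and since only null sets and
Hausdorff dimensions matter, the sup norm may be used and directions may be replaced by the slopes
`v ∈ ℝ^d` of lines which are graphs over the coordinate `i₀` (`slope_null`).

Hausdorff measures enter only through the dyadic Hausdorff content. It satisfies the increasing
sets lemma `content_iUnion_eq`. This makes it capacitable on analytic sets, so `A` contains a compact
set `K` of positive `s`-content (`exists_compact_content_pos`). The discrete Frostman lemma
`frostman` gives, at every scale, finite families of weights on `K` and on pieces of `E`, whose total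
mass is at least the content and which satisfy the Frostman ball condition down to that scale.

For `x ∈ E` the slopes of the lines from `x` to `K` form a null compact set. Hence the density of
these slopes, smoothed at scale `2 ^ (-m)`, lives on a set of very small measure for large `m`, and
differs from the density smoothed at a coarse scale `2 ^ (-k)` by a fixed amount in `L¹`
(`Hden_change`). By telescoping (`Hden_telescope`), the change between two consecutive scales must
be large at some scale between them. This change is controlled by `Fav`, an average of `|Dsum|` over
the tubes through `x`, where `Dsum` is a sum of tube functions `psi` around the points of `K`.

By the Cauchy-Schwarz inequality, the average of `Fav` against Frostman weights on a piece of `E` is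
bounded by the energy of the weights on `E` with the kernel of `phi` and the energy of the weights on
`K` with the kernel of `psi` (`sum_Fav_le`). At scale `r` and distance `ρ` the first kernel decays
like `(r / ρ) ^ d`, up to the normalization of the tubes, but a `d`-dimensional decay would not
suffice for weights of dimension `s > d`. The second kernel decays like `(r / ρ) ^ (d + 1)`, because
`psi` has integral zero and the cutoff `wt` in the space of slopes is Lipschitz
(`kernel_far_cancel`). The resulting bound for the `t`-content of the level sets of `Fav` at scale
`2 ^ (-j)` is a multiple of `(2 ^ (d - (s + t) / 2)) ^ j` (`content_level_le`), which is summable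
exactly because `s + t > 2 d`. Thus the points of `E` with a small slope neighbourhood at scale
`2 ^ (-m)` have `t`-content at most `C q ^ k`, where `q < 1` and `C` depend neither on `m` nor on
`k` (`content_small_nbd`). Letting `m → ∞`, by the increasing sets lemma, and then `k → ∞` shows
that `E` has `t`-content zero (`content_eq_zero`), which contradicts `t < dim E`. -/

open MeasureTheory Metric
open scoped ENNReal

namespace RadProj

/-! ### Dyadic contents -/

/-- The index of the half-open dyadic cube of side `2 ^ (-l)` containing `x`. -/
noncomputable def qd {n : ℕ} (l : ℕ) (x : Fin n → ℝ) : Fin n → ℤ := fun i => ⌊(2 : ℝ) ^ l * x i⌋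

lemma qd_succ {n : ℕ} (l : ℕ) (x : Fin n → ℝ) (i : Fin n) : qd l x i = qd (l + 1) x i / 2 := by
  have h := Int.floor_div_natCast ((2 : ℝ) ^ (l + 1) * x i) 2
  unfold qd
  rw [show ((2 : ℕ) : ℤ) = 2 from rfl] at h
  rw [← h]
  congr 1
  push_cast
  ring

lemma qd_nest {n : ℕ} {l l' : ℕ} (h : l ≤ l') {x y : Fin n → ℝ} (hxy : qd l' x = qd l' y) :
    qd l x = qd l y := by
  induction l', h using Nat.le_induction with
  | base => exact hxy
  | succ m hm ih =>
    apply ih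
    funext i
    rw [qd_succ m x, qd_succ m y, hxy]

lemma dist_le_of_qd {n : ℕ} {l : ℕ} {x y : Fin n → ℝ} (h : qd l x = qd l y) :
    dist x y ≤ (1 / 2) ^ l := by
  rw [dist_pi_le_iff (by positivity)]
  intro i
  have h1 := Int.abs_sub_lt_one_of_floor_eq_floor (congrFun h i)
  rw [← mul_sub, abs_mul, abs_of_pos (by positivity : (0 : ℝ) < 2 ^ l)] at h1
  rw [Real.dist_eq, one_div, inv_pow, ← one_div, le_div_iff₀ (by positivity)]
  linarith

lemma qd_mem_Icc {n : ℕ} {l : ℕ} {x y : Fin n → ℝ} (h : dist y x ≤ (1 / 2) ^ l) :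
    qd l y ∈ Finset.Icc (qd l x - 1) (qd l x + 1) := by
  have key : ∀ i, |2 ^ l * y i - 2 ^ l * x i| ≤ 1 := by
    intro i
    have h1 := (dist_le_pi_dist y x i).trans h
    rw [Real.dist_eq, one_div, inv_pow, ← one_div, le_div_iff₀ (by positivity)] at h1
    rw [← mul_sub, abs_mul, abs_of_pos (by positivity : (0 : ℝ) < 2 ^ l)]
    linarith
  rw [Finset.mem_Icc]
  constructor
  · intro i
    have := abs_le.1 (key i)
    simp only [qd, Pi.sub_apply, Pi.one_apply]
    rw [← Int.floor_sub_one]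
    exact Int.floor_le_floor (by linarith)
  · intro i
    have := abs_le.1 (key i)
    simp only [qd, Pi.add_apply, Pi.one_apply]
    rw [← Int.floor_add_one]
    exact Int.floor_le_floor (by linarith)

lemma card_Icc_qd {n : ℕ} (q : Fin n → ℤ) : (Finset.Icc (q - 1) (q + 1)).card = 3 ^ n := by
  rw [Pi.card_Icc]
  have : ∀ i, (Finset.Icc ((q - 1) i) ((q + 1) i)).card = 3 := by
    intro i
    simp only [Pi.sub_apply, Pi.add_apply, Pi.one_apply, Int.card_Icc]
    omega
  rw [Finset.prod_congr rfl fun i _ => this i]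
  simp

/-- The total weight of a family of dyadic cubes, a cube of level `l` having weight `θ ^ l`.
It is set up as a measure on the countable set of indices; `θ = 2 ^ (-s)` gives the sum of the
`s`-th powers of the side lengths. -/
noncomputable def cost {n : ℕ} (θ : ℝ) : Measure (ℕ × (Fin n → ℤ)) :=
  Measure.sum (fun j => ENNReal.ofReal (θ ^ j.1) • Measure.dirac j)

lemma cost_singleton {n : ℕ} (θ : ℝ) (j : ℕ × (Fin n → ℤ)) :
    cost θ {j} = ENNReal.ofReal (θ ^ j.1) := by
  unfold cost
  rw [Measure.sum_apply _ (Set.to_countable _).measurableSet, tsum_eq_single j]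
  · simp
  · intro b hb
    simp [hb]

/-- `C` is a family of dyadic cubes covering `S`. -/
def Cov {n : ℕ} (C : Set (ℕ × (Fin n → ℤ))) (S : Set (Fin n → ℝ)) : Prop :=
  ∀ x ∈ S, ∃ l, (l, qd l x) ∈ C

/-- The dyadic (net) Hausdorff content: the infimum of the weights of countable covers by dyadic
cubes of side at most one. -/
noncomputable def content {n : ℕ} (θ : ℝ) (S : Set (Fin n → ℝ)) : ℝ≥0∞ :=
  ⨅ (C : Set (ℕ × (Fin n → ℤ))) (_ : Cov C S), cost θ C

lemma content_le {n : ℕ} {θ : ℝ} {S : Set (Fin n → ℝ)} {C : Set (ℕ × (Fin n → ℤ))}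
    (h : Cov C S) : content θ S ≤ cost θ C := iInf₂_le C h

lemma content_mono {n : ℕ} {θ : ℝ} {S T : Set (Fin n → ℝ)} (h : S ⊆ T) :
    content θ S ≤ content θ T :=
  le_iInf₂ fun _ hC => content_le fun x hx => hC x (h hx)

lemma exists_cov {n : ℕ} {θ : ℝ} {S : Set (Fin n → ℝ)} {a : ℝ≥0∞} (h : content θ S < a) :
    ∃ C, Cov C S ∧ cost θ C < a := by
  unfold content at h
  simp only [iInf_lt_iff] at h
  obtain ⟨C, hC, h⟩ := h
  exact ⟨C, hC, h⟩

lemma content_iUnion_le {n : ℕ} {θ : ℝ} {ι : Type} [Countable ι] (S : ι → Set (Fin n → ℝ)) :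
    content θ (⋃ i, S i) ≤ ∑' i, content θ (S i) := by
  by_cases htop : ∑' i, content θ (S i) = ∞
  · simp [htop]
  refine ENNReal.le_of_forall_pos_le_add fun ε hε _ => ?_
  obtain ⟨δ, hδ, hsum⟩ := ENNReal.exists_pos_sum_of_countable'
    (ENNReal.coe_ne_zero.2 hε.ne') ι
  have hc : ∀ i, ∃ C, Cov C (S i) ∧ cost θ C < content θ (S i) + δ i := fun i =>
    exists_cov (ENNReal.lt_add_right (ENNReal.ne_top_of_tsum_ne_top htop i) (hδ i).ne')
  choose C hC hlt using hc
  have hcov : Cov (⋃ i, C i) (⋃ i, S i) := by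
    intro x hx
    obtain ⟨i, hi⟩ := Set.mem_iUnion.1 hx
    obtain ⟨l, hl⟩ := hC i x hi
    exact ⟨l, Set.mem_iUnion.2 ⟨i, hl⟩⟩
  calc content θ (⋃ i, S i) ≤ cost θ (⋃ i, C i) := content_le hcov
    _ ≤ ∑' i, cost θ (C i) := measure_iUnion_le _
    _ ≤ ∑' i, (content θ (S i) + δ i) := ENNReal.tsum_le_tsum fun i => (hlt i).le
    _ = ∑' i, content θ (S i) + ∑' i, δ i := ENNReal.tsum_add
    _ ≤ _ := by gcongr

lemma content_empty {n : ℕ} {θ : ℝ} : content θ (∅ : Set (Fin n → ℝ)) = 0 := by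
  refine le_antisymm ((content_le (C := ∅) fun x hx => absurd hx (by simp)).trans ?_) (zero_le)
  simp

lemma content_union_le {n : ℕ} {θ : ℝ} (S T : Set (Fin n → ℝ)) :
    content θ (S ∪ T) ≤ content θ S + content θ T := by
  have h := content_iUnion_le (θ := θ) (fun b : Bool => cond b S T)
  rw [← Set.union_eq_iUnion, tsum_bool] at h
  simpa [add_comm] using h

/-- The dyadic cube of level `l` containing `x`. -/
def cube {n : ℕ} (l : ℕ) (x : Fin n → ℝ) : Set (Fin n → ℝ) := {y | qd l y = qd l x}

/-- If `S` fills little of every strict ancestor of a finite disjoint family of cubes, then an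
almost optimal cover of `S` avoids those ancestors, so the contents in the cubes add up. -/
lemma sum_content_le {n : ℕ} {θ : ℝ} (hθ : 0 < θ) (hθ1 : θ ≤ 1) {η : ℝ} (hη0 : 0 ≤ η) (hη : η < 1)
    (S : Set (Fin n → ℝ)) (F : Finset (ℕ × (Fin n → ℤ)))
    (pt : ℕ × (Fin n → ℤ) → (Fin n → ℝ))
    (hpt : ∀ j ∈ F, qd j.1 (pt j) = j.2)
    (hdisj : ∀ j ∈ F, ∀ j' ∈ F, ∀ z, qd j.1 z = j.2 → qd j'.1 z = j'.2 → j = j')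
    (hsmall : ∀ j ∈ F, ∀ l < j.1,
      content θ (S ∩ cube l (pt j)) ≤ ENNReal.ofReal (η * θ ^ l)) :
    ∑ j ∈ F, content θ (S ∩ cube j.1 (pt j)) ≤ content θ S := by
  by_cases htop : content θ S = ∞
  · simp [htop]
  refine ENNReal.le_of_forall_pos_le_add fun ε hε _ => ?_
  -- `κ` is a lower bound for the saving obtained when a strict ancestor in a cover is replaced by
  -- a cover of the part of `S` in it
  set L := F.sup Prod.fst with hL
  set κ : ℝ≥0∞ := ENNReal.ofReal ((1 - η) * θ ^ L) with hκ
  have hκpos : κ ≠ 0 := by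
    rw [hκ, Ne, ENNReal.ofReal_eq_zero, not_le]
    exact mul_pos (by linarith) (by positivity)
  have hmin : min (ε : ℝ≥0∞) κ ≠ 0 := by
    intro h
    rcases min_choice (ε : ℝ≥0∞) κ with h' | h'
    · rw [h'] at h; exact hε.ne' (by exact_mod_cast h)
    · rw [h'] at h; exact hκpos h
  obtain ⟨C, hC, hlt⟩ := exists_cov (ENNReal.lt_add_right htop hmin)
  have hCtop : cost θ C ≠ ∞ := (lt_of_lt_of_le hlt le_top).ne
  -- the cover does not use any strict ancestor
  have hno : ∀ j ∈ F, ∀ l < j.1, (l, qd l (pt j)) ∉ C := by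
    intro j hj l hl hmem
    have h1 : content θ S ≤ ENNReal.ofReal (η * θ ^ l) + cost θ (C \ {(l, qd l (pt j))}) := by
      calc content θ S ≤ content θ ((S ∩ cube l (pt j)) ∪ (S \ cube l (pt j))) :=
            content_mono (by rw [Set.inter_union_sdiff])
        _ ≤ content θ (S ∩ cube l (pt j)) + content θ (S \ cube l (pt j)) := content_union_le _ _
        _ ≤ _ := by
          gcongr
          · exact hsmall j hj l hl
          · apply content_le
            intro x hx
            obtain ⟨l', hl'⟩ := hC x hx.1
            refine ⟨l', hl', ?_⟩
            intro h
            simp only [Set.mem_singleton_iff, Prod.mk.injEq] at h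
            obtain ⟨rfl, h⟩ := h
            exact hx.2 h
    have h2 : cost θ C = cost θ (C \ {(l, qd l (pt j))}) + ENNReal.ofReal (θ ^ l) := by
      rw [← cost_singleton θ (l, qd l (pt j)), add_comm, ← measure_union]
      · rw [Set.union_sdiff_cancel (by simpa using hmem)]
      · exact Set.disjoint_sdiff_right
      · exact (Set.to_countable _).measurableSet
    have h3 : ENNReal.ofReal (η * θ ^ l) + κ ≤ ENNReal.ofReal (θ ^ l) := by
      have hl' : l ≤ L := hl.le.trans (Finset.le_sup (f := Prod.fst) hj)
      have h4 : κ ≤ ENNReal.ofReal ((1 - η) * θ ^ l) := by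
        apply ENNReal.ofReal_le_ofReal
        have := pow_le_pow_of_le_one hθ.le hθ1 hl'
        have : 0 ≤ 1 - η := by linarith
        gcongr
      calc _ ≤ ENNReal.ofReal (η * θ ^ l) + ENNReal.ofReal ((1 - η) * θ ^ l) := by gcongr
        _ = _ := by
          rw [← ENNReal.ofReal_add (by positivity)
            (mul_nonneg (by linarith) (by positivity))]
          congr 1; ring
    have h5 : content θ S + κ ≤ cost θ C := by
      calc content θ S + κ ≤ ENNReal.ofReal (η * θ ^ l) + cost θ (C \ {(l, qd l (pt j))}) + κ := by
            gcongr
        _ = cost θ (C \ {(l, qd l (pt j))}) + (ENNReal.ofReal (η * θ ^ l) + κ) := by ring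
        _ ≤ cost θ (C \ {(l, qd l (pt j))}) + ENNReal.ofReal (θ ^ l) := by gcongr
        _ = _ := h2.symm
    exact absurd (hlt.trans_le ((by gcongr; exact min_le_right _ _ :
      content θ S + min (ε : ℝ≥0∞) κ ≤ content θ S + κ).trans h5)) (lt_irrefl _)
  set D : ℕ × (Fin n → ℤ) → Set (ℕ × (Fin n → ℤ)) := fun j =>
    {p | p ∈ C ∧ ∃ y ∈ S ∩ cube j.1 (pt j), qd p.1 y = p.2} with hD
  have hlev : ∀ j ∈ F, ∀ p ∈ D j, j.1 ≤ p.1 := by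
    rintro j hj ⟨l, q⟩ ⟨hp, y, hy, hyq⟩
    by_contra! hlt
    simp only at hlt hyq
    have : qd l y = qd l (pt j) := qd_nest hlt.le hy.2
    exact hno j hj l hlt (by rw [← this, hyq]; exact hp)
  calc ∑ j ∈ F, content θ (S ∩ cube j.1 (pt j)) ≤ ∑ j ∈ F, cost θ (D j) := by
        apply Finset.sum_le_sum
        intro j hj
        apply content_le
        intro y hy
        obtain ⟨l, hl⟩ := hC y hy.1
        exact ⟨l, hl, y, hy, rfl⟩
    _ = cost θ (⋃ j ∈ F, D j) := by
        rw [measure_biUnion_finset]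
        · intro j hj j' hj' hne
          rw [Function.onFun, Set.disjoint_left]
          rintro p hp hp'
          obtain ⟨_, y, hy, hyq⟩ := id hp
          obtain ⟨_, y', hy', hyq'⟩ := id hp'
          apply hne
          have hl' := hlev j hj p hp
          refine hdisj j hj j' hj' y' ?_ (hy'.2.trans (hpt j' hj'))
          rw [qd_nest hl' (hyq'.trans hyq.symm)]
          exact hy.2.trans (hpt j hj)
        · intro j _
          exact (Set.to_countable _).measurableSet
    _ ≤ cost θ C := measure_mono (by
        simp only [Set.iUnion_subset_iff]
        intro j _ p hp
        exact hp.1)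
    _ ≤ content θ S + min (ε : ℝ≥0∞) κ := hlt.le
    _ ≤ content θ S + ε := by gcongr; exact min_le_left _ _

/-! ### The increasing sets lemma -/

lemma cost_eq_tsum {n : ℕ} (θ : ℝ) (C : Set (ℕ × (Fin n → ℤ))) :
    cost θ C = ∑' j : C, ENNReal.ofReal (θ ^ j.1.1) := by
  conv_lhs => rw [← Set.biUnion_of_singleton C]
  rw [measure_biUnion (Set.to_countable C)]
  · simp only [cost_singleton]
  · intro i _ j _ h
    simpa [Function.onFun] using h
  · exact fun _ _ => (Set.to_countable _).measurableSet

lemma cost_finset {n : ℕ} (θ : ℝ) (C : Finset (ℕ × (Fin n → ℤ))) :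
    cost θ (C : Set (ℕ × (Fin n → ℤ))) = ∑ j ∈ C, ENNReal.ofReal (θ ^ j.1) := by
  rw [cost_eq_tsum]
  exact Finset.tsum_subtype C (fun j => ENNReal.ofReal (θ ^ j.1))

/-- Increasing sets lemma up to a factor: the cubes in which the contents of the `A i` are close
to full carry the mass, and what lies outside those cubes has zero content. -/
lemma content_iUnion_mul_le {n : ℕ} {θ : ℝ} (hθ : 0 < θ) (hθ1 : θ ≤ 1) {η : ℝ} (hη0 : 0 < η)
    (hη : η < 1) (A : ℕ → Set (Fin n → ℝ)) (hA : Monotone A) :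
    ENNReal.ofReal η * content θ (⋃ i, A i) ≤ ⨆ i, content θ (A i) := by
  set M := ⨆ i, content θ (A i) with hM
  by_cases htop : M = ∞
  · simp [htop]
  -- `nearFull x l`: the cube of level `l` at `x` is nearly full
  let nearFull : (Fin n → ℝ) → ℕ → Prop := fun x l =>
    ENNReal.ofReal (η * θ ^ l) ≤ ⨆ i, content θ (A i ∩ cube l x)
  have hcube : ∀ l (x y : Fin n → ℝ), qd l x = qd l y → cube l x = cube l y := by
    intro l x y h; unfold cube; rw [h]
  have nearFull_congr : ∀ l (x y : Fin n → ℝ), qd l x = qd l y → nearFull x l → nearFull y l := by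
    intro l x y h hs
    simp only [nearFull] at hs ⊢
    rwa [← hcube l x y h]
  -- the maximal nearly full cubes
  let F : Set (ℕ × (Fin n → ℤ)) :=
    {j | ∃ x, qd j.1 x = j.2 ∧ nearFull x j.1 ∧ ∀ l < j.1, ¬ nearFull x l}
  have hF : ENNReal.ofReal η * cost θ F ≤ M := by
    have hfin : ∀ T : Finset (ℕ × (Fin n → ℤ)), (∀ j ∈ T, j ∈ F) →
        ENNReal.ofReal η * ∑ j ∈ T, ENNReal.ofReal (θ ^ j.1) ≤ M := by
      intro T hT
      choose! pt hpt hNear hnot using hT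
      have hdisj : ∀ j ∈ T, ∀ j' ∈ T, ∀ z, qd j.1 z = j.2 → qd j'.1 z = j'.2 → j = j' := by
        intro j hj j' hj' z hz hz'
        have h1 : ¬ j.1 < j'.1 := fun h => hnot j' hj' _ h (nearFull_congr _ (pt j) _
          ((hpt j hj).trans (hz.symm.trans (qd_nest h.le (hz'.trans (hpt j' hj').symm))))
          (hNear j hj))
        have h2 : ¬ j'.1 < j.1 := fun h => hnot j hj _ h (nearFull_congr _ (pt j') _
          ((hpt j' hj').trans (hz'.symm.trans (qd_nest h.le (hz.trans (hpt j hj).symm))))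
          (hNear j' hj'))
        have h3 : j.1 = j'.1 := by omega
        refine Prod.ext h3 ?_
        rw [← hz, ← hz', h3]
      calc ENNReal.ofReal η * ∑ j ∈ T, ENNReal.ofReal (θ ^ j.1)
          = ∑ j ∈ T, ENNReal.ofReal (η * θ ^ j.1) := by
            rw [Finset.mul_sum]
            exact Finset.sum_congr rfl fun j _ => (ENNReal.ofReal_mul hη0.le).symm
        _ ≤ ∑ j ∈ T, ⨆ i, content θ (A i ∩ cube j.1 (pt j)) :=
            Finset.sum_le_sum fun j hj => hNear j hj
        _ = ⨆ i, ∑ j ∈ T, content θ (A i ∩ cube j.1 (pt j)) :=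
            ENNReal.finsetSum_iSup_of_monotone fun j i i' h =>
              content_mono (Set.inter_subset_inter_left _ (hA h))
        _ ≤ M := by
            refine iSup_mono fun i => ?_
            refine sum_content_le hθ hθ1 hη0.le hη (A i) T pt hpt hdisj ?_
            intro j hj l hl
            have := hnot j hj l hl
            simp only [nearFull, not_le] at this
            exact (le_iSup (fun i => content θ (A i ∩ cube l (pt j))) i).trans this.le
    rw [cost_eq_tsum, ENNReal.tsum_eq_iSup_sum, ENNReal.mul_iSup]
    refine iSup_le fun T => ?_
    have := hfin (T.map (Function.Embedding.subtype _)) (by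
      intro j hj
      obtain ⟨x, _, rfl⟩ := Finset.mem_map.1 hj
      exact x.2)
    simpa [Finset.sum_map] using this
  -- in every cube which meets `R` the content of `A i` is less than `η` times full, so a cover of
  -- `A i ∩ R` can be improved by the factor `η`
  set R : Set (Fin n → ℝ) := {x | ∀ l, ¬ nearFull x l} with hR
  have hRi : ∀ i, content θ (A i ∩ R) = 0 := by
    intro i
    have hBtop : content θ (A i ∩ R) ≠ ∞ :=
      ne_top_of_le_ne_top htop ((content_mono Set.inter_subset_left).trans
        (le_iSup (fun i => content θ (A i)) i))
    have hle : content θ (A i ∩ R) ≤ ENNReal.ofReal η * content θ (A i ∩ R) := by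
      conv_rhs => unfold content
      rw [ENNReal.mul_iInf_of_ne (by simpa using hη0) ENNReal.ofReal_ne_top]
      refine le_iInf fun C => ?_
      rw [ENNReal.mul_iInf_of_ne (by simpa using hη0) ENNReal.ofReal_ne_top]
      refine le_iInf fun hC => ?_
      set C' : Set (ℕ × (Fin n → ℤ)) := {p | p ∈ C ∧ ∃ y ∈ A i ∩ R, qd p.1 y = p.2} with hC'
      calc content θ (A i ∩ R)
          ≤ content θ (⋃ p : C', (A i ∩ R) ∩ {y | qd p.1.1 y = p.1.2}) := by
            apply content_mono
            intro y hy
            obtain ⟨l, hl⟩ := hC y hy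
            exact Set.mem_iUnion.2 ⟨⟨(l, qd l y), hl, y, hy, rfl⟩, hy, rfl⟩
        _ ≤ ∑' p : C', content θ ((A i ∩ R) ∩ {y | qd p.1.1 y = p.1.2}) := content_iUnion_le _
        _ ≤ ∑' p : C', ENNReal.ofReal η * ENNReal.ofReal (θ ^ p.1.1) := by
            refine ENNReal.tsum_le_tsum fun ⟨p, hp, y, hy, hyp⟩ => ?_
            have h1 : ¬ nearFull y p.1 := hy.2 _
            simp only [nearFull, not_le] at h1
            rw [← ENNReal.ofReal_mul hη0.le]
            refine le_trans ?_ h1.le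
            refine le_trans (content_mono ?_) (le_iSup (fun i => content θ (A i ∩ cube p.1 y)) i)
            rintro z ⟨hz, hz'⟩
            exact ⟨hz.1, Eq.trans hz' hyp.symm⟩
        _ = ENNReal.ofReal η * cost θ C' := by rw [ENNReal.tsum_mul_left, cost_eq_tsum]
        _ ≤ ENNReal.ofReal η * cost θ C := by
            gcongr
            exact fun p hp => hp.1
    by_contra h0
    have : ENNReal.ofReal η * content θ (A i ∩ R) < 1 * content θ (A i ∩ R) := by
      apply ENNReal.mul_lt_mul_left h0 hBtop
      simpa using hη
    rw [one_mul] at this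
    exact absurd (hle.trans_lt this) (lt_irrefl _)
  have hsplit : (⋃ i, A i) ⊆ Rᶜ ∪ ⋃ i, (A i ∩ R) := by
    intro x hx
    by_cases hxR : x ∈ R
    · obtain ⟨i, hi⟩ := Set.mem_iUnion.1 hx
      exact Or.inr (Set.mem_iUnion.2 ⟨i, hi, hxR⟩)
    · exact Or.inl hxR
  have hcovF : Cov F Rᶜ := by
    intro x hx
    have hx' : ∃ l, nearFull x l := by
      simpa [hR] using hx
    classical
    exact ⟨Nat.find hx', x, rfl, Nat.find_spec hx', fun l hl => Nat.find_min hx' hl⟩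
  calc ENNReal.ofReal η * content θ (⋃ i, A i)
      ≤ ENNReal.ofReal η * (content θ Rᶜ + content θ (⋃ i, A i ∩ R)) := by
        gcongr
        exact (content_mono hsplit).trans (content_union_le _ _)
    _ ≤ ENNReal.ofReal η * (cost θ F + ∑' i, content θ (A i ∩ R)) := by
        gcongr
        · exact content_le hcovF
        · exact content_iUnion_le _
    _ ≤ M := by simpa [hRi] using hF

/-- Increasing sets lemma for the dyadic content, which holds for arbitrary sets. -/
lemma content_iUnion_eq {n : ℕ} {θ : ℝ} (hθ : 0 < θ) (hθ1 : θ ≤ 1)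
    (A : ℕ → Set (Fin n → ℝ)) (hA : Monotone A) :
    content θ (⋃ i, A i) ≤ ⨆ i, content θ (A i) := by
  set M := ⨆ i, content θ (A i) with hM
  refine ENNReal.le_of_forall_lt_one_mul_le fun a ha => ?_
  by_cases ha0 : a = 0
  · simp [ha0]
  have h1 : ENNReal.ofReal a.toReal = a := ENNReal.ofReal_toReal (ha.trans ENNReal.one_lt_top).ne
  rw [← h1]
  refine content_iUnion_mul_le hθ hθ1 ?_ ?_ A hA
  · exact ENNReal.toReal_pos ha0 (ha.trans ENNReal.one_lt_top).ne
  · simpa using (ENNReal.toReal_lt_toReal (ha.trans ENNReal.one_lt_top).ne ENNReal.one_ne_top).2 ha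

/-! ### Capacitability and the discrete Frostman lemma -/

lemma dist_lt_of_qd {n : ℕ} {l : ℕ} {x y : Fin n → ℝ} (h : qd l x = qd l y) :
    dist x y < (1 / 2) ^ l := by
  rw [dist_pi_lt_iff (by positivity)]
  intro i
  have h1 := Int.abs_sub_lt_one_of_floor_eq_floor (congrFun h i)
  rw [← mul_sub, abs_mul, abs_of_pos (by positivity : (0 : ℝ) < 2 ^ l)] at h1
  rw [Real.dist_eq, one_div, inv_pow, ← one_div, lt_div_iff₀ (by positivity)]
  linarith

lemma content_ball_le {n : ℕ} {θ : ℝ} (hθ : 0 < θ) (l : ℕ) (x : Fin n → ℝ) :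
    content θ (ball x ((1 / 2) ^ l)) ≤ 3 ^ n * ENNReal.ofReal (θ ^ l) := by
  classical
  refine (content_le (C := ((Finset.Icc (qd l x - 1) (qd l x + 1)).image fun q => (l, q) :
    Finset (ℕ × (Fin n → ℤ)))) ?_).trans ?_
  · intro y hy
    refine ⟨l, ?_⟩
    rw [Finset.mem_coe, Finset.mem_image]
    exact ⟨_, qd_mem_Icc (mem_ball.1 hy).le, rfl⟩
  · rw [cost_finset, Finset.sum_image (by intro a _ b _ h; simpa using h)]
    change ∑ _q ∈ Finset.Icc (qd l x - 1) (qd l x + 1), ENNReal.ofReal (θ ^ l) ≤ _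
    rw [Finset.sum_const, card_Icc_qd, nsmul_eq_mul]
    simp

/-- A set of small content has an open neighbourhood of small content. -/
lemma exists_open_content_le {n : ℕ} {θ : ℝ} (hθ : 0 < θ) (K : Set (Fin n → ℝ)) {a : ℝ≥0∞}
    (h : content θ K < a) : ∃ U, IsOpen U ∧ K ⊆ U ∧ content θ U ≤ 3 ^ n * a := by
  obtain ⟨C, hC, hlt⟩ := exists_cov h
  set C' : Set (ℕ × (Fin n → ℤ)) := {p | p ∈ C ∧ ∃ y ∈ K, qd p.1 y = p.2} with hC'
  have hy : ∀ p : C', ∃ y, y ∈ K ∧ qd p.1.1 y = p.1.2 := fun p => p.2.2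
  choose y hyK hyp using hy
  refine ⟨⋃ p : C', ball (y p) ((1 / 2) ^ p.1.1), isOpen_iUnion fun _ => isOpen_ball, ?_, ?_⟩
  · intro x hx
    obtain ⟨l, hl⟩ := hC x hx
    refine Set.mem_iUnion.2 ⟨⟨(l, qd l x), hl, x, hx, rfl⟩, ?_⟩
    exact mem_ball.2 (dist_lt_of_qd (hyp ⟨(l, qd l x), hl, x, hx, rfl⟩).symm)
  · calc _ ≤ ∑' p : C', content θ (ball (y p) ((1 / 2) ^ p.1.1)) := content_iUnion_le _
      _ ≤ ∑' p : C', 3 ^ n * ENNReal.ofReal (θ ^ p.1.1) :=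
        ENNReal.tsum_le_tsum fun p => content_ball_le hθ _ _
      _ = 3 ^ n * cost θ C' := by rw [ENNReal.tsum_mul_left, cost_eq_tsum]
      _ ≤ 3 ^ n * a := by
        gcongr
        exact (measure_mono fun p hp => hp.1).trans hlt.le

/-- Capacitability of analytic sets for the dyadic content: the increasing sets lemma allows one
to bound the coordinates of Baire space one after the other. -/
lemma exists_compact_content_pos {n : ℕ} {θ : ℝ} (hθ : 0 < θ) (hθ1 : θ ≤ 1)
    {A : Set (Fin n → ℝ)} (hA : AnalyticSet A) (hpos : 0 < content θ A) :
    ∃ K ⊆ A, IsCompact K ∧ 0 < content θ K := by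
  rw [AnalyticSet] at hA
  rcases hA with rfl | ⟨f, hf, rfl⟩
  · simp [content_empty] at hpos
  obtain ⟨lam, hlam, hlam'⟩ := exists_between hpos
  have step : ∀ (m : ℕ) (B : Set (ℕ → ℕ)), lam < content θ (f '' B) →
      ∃ j, lam < content θ (f '' (B ∩ {σ | σ m ≤ j})) := by
    intro m B hB
    have h1 : f '' B = ⋃ j, f '' (B ∩ {σ | σ m ≤ j}) := by
      rw [← Set.image_iUnion, ← Set.inter_iUnion]
      congr 1
      rw [Set.iUnion_eq_univ_iff.2 fun σ => ⟨σ m, le_refl (σ m)⟩, Set.inter_univ]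
    rw [h1] at hB
    have h2 := hB.trans_le (content_iUnion_eq hθ hθ1 _ fun j j' h =>
      Set.image_mono (Set.inter_subset_inter_right _ fun σ (hσ : σ m ≤ j) => hσ.trans h))
    exact lt_iSup_iff.1 h2
  choose! J hJ using step
  let B : ℕ → Set (ℕ → ℕ) := fun m => Nat.rec Set.univ (fun m B => B ∩ {σ | σ m ≤ J m B}) m
  have hB : ∀ m, lam < content θ (f '' B m) := by
    intro m
    induction m with
    | zero => simpa [B] using hlam'
    | succ m ih => exact hJ m _ ih
  set k : ℕ → ℕ := fun m => J m (B m) with hk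
  have hBk : ∀ m, B m = {σ | ∀ i < m, σ i ≤ k i} := by
    intro m
    induction m with
    | zero => simp [B]
    | succ m ih =>
      change B m ∩ {σ | σ m ≤ k m} = _
      rw [ih]
      ext σ
      simp only [Set.mem_inter_iff, Set.mem_ofPred_eq, Nat.lt_succ_iff_lt_or_eq]
      constructor
      · rintro ⟨h1, h2⟩ i (hi | rfl)
        · exact h1 i hi
        · exact h2
      · intro h
        exact ⟨fun i hi => h i (Or.inl hi), h m (Or.inr rfl)⟩
  set Z : Set (ℕ → ℕ) := Set.univ.pi fun i => Set.Iic (k i) with hZ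
  have hZc : IsCompact Z := isCompact_univ_pi fun i => (Set.finite_Iic _).isCompact
  refine ⟨f '' Z, Set.image_subset_range _ _, hZc.image hf, ?_⟩
  by_contra h0
  have h0' : content θ (f '' Z) < lam / 3 ^ n := by
    rw [not_lt.1 h0 |>.antisymm zero_le]
    exact ENNReal.div_pos hlam.ne' (by simp)
  obtain ⟨U, hU, hKU, hUc⟩ := exists_open_content_le hθ _ h0'
  have hUc' : content θ U ≤ lam := hUc.trans ENNReal.mul_div_le
  -- some finite box is mapped into `U`
  have hloc : ∀ σ ∈ Z, ∃ m, PiNat.cylinder σ m ⊆ f ⁻¹' U := by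
    intro σ hσ
    have h1 : f ⁻¹' U ∈ nhds σ := (hU.preimage hf).mem_nhds (hKU ⟨σ, hσ, rfl⟩)
    let _ := PiNat.metricSpaceNatNat
    obtain ⟨ε, hε, hball⟩ := Metric.mem_nhds_iff.1 h1
    obtain ⟨m, hm⟩ := exists_pow_lt_of_lt_one hε (by norm_num : (1 / 2 : ℝ) < 1)
    refine ⟨m, fun τ hτ => hball ?_⟩
    rw [mem_ball]
    exact (PiNat.mem_cylinder_iff_dist_le.1 hτ).trans_lt hm
  choose! m hm using hloc
  obtain ⟨t, htZ, ht⟩ := hZc.elim_nhds_subcover (fun σ => PiNat.cylinder σ (m σ)) fun σ _ =>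
    (PiNat.isOpen_cylinder _ σ (m σ)).mem_nhds (PiNat.self_mem_cylinder _ _)
  have hsub : f '' B (t.sup m) ⊆ U := by
    rintro _ ⟨σ, hσ, rfl⟩
    rw [hBk] at hσ
    set τ : ℕ → ℕ := fun i => if i < t.sup m then σ i else 0 with hτ
    have hτZ : τ ∈ Z := by
      intro i _
      simp only [hτ, Set.mem_Iic]
      split_ifs with h
      · exact hσ i h
      · exact Nat.zero_le _
    obtain ⟨ρ, hρ, hτρ⟩ := Set.mem_iUnion₂.1 (ht hτZ)
    apply hm ρ (htZ ρ hρ)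
    rw [PiNat.mem_cylinder_iff] at hτρ ⊢
    intro i hi
    rw [← hτρ i hi]
    simp only [hτ]
    rw [if_pos (hi.trans_le (Finset.le_sup hρ))]
  exact absurd ((hB _).trans_le ((content_mono hsub).trans hUc')) (lt_irrefl _)

/-- Sets of content zero have Hausdorff measure zero, because a cover of small weight consists of
small cubes. -/
lemma hausdorff_eq_zero {n : ℕ} {t : ℝ} (ht : 0 < t) {S : Set (Fin n → ℝ)}
    (h : content ((2 : ℝ) ^ (-t)) S = 0) : μH[t] S = 0 := by
  set θ : ℝ := (2 : ℝ) ^ (-t) with hθ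
  have hθ0 : 0 < θ := by positivity
  have hθ1 : θ < 1 := Real.rpow_lt_one_of_one_lt_of_neg (by norm_num) (by linarith)
  have hex : ∀ k : ℕ, ∃ C : Set (ℕ × (Fin n → ℤ)), Cov C S ∧ cost θ C < ENNReal.ofReal (θ ^ k) :=
    fun k => exists_cov (by rw [h]; simpa using by positivity)
  choose C hC hlt using hex
  have hlev : ∀ k, ∀ p ∈ C k, k ≤ p.1 := by
    intro k p hp
    by_contra! hh
    have h1 : ENNReal.ofReal (θ ^ p.1) ≤ cost θ (C k) := by
      rw [← cost_singleton]; exact measure_mono (by simpa using hp)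
    have h2 := h1.trans_lt (hlt k)
    rw [ENNReal.ofReal_lt_ofReal_iff (by positivity)] at h2
    exact absurd (pow_le_pow_of_le_one hθ0.le hθ1.le hh.le) (not_le.2 h2)
  have hdiam : ∀ p : ℕ × (Fin n → ℤ),
      Metric.ediam {y : Fin n → ℝ | qd p.1 y = p.2} ≤ ENNReal.ofReal ((1 / 2) ^ p.1) := by
    intro p
    refine Metric.ediam_le fun x hx y hy => ?_
    rw [edist_dist]
    exact ENNReal.ofReal_le_ofReal (dist_le_of_qd (Eq.trans hx (Eq.symm hy)))
  have key := Measure.hausdorffMeasure_le_liminf_tsum (l := Filter.atTop) t S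
    (fun k : ℕ => ENNReal.ofReal ((1 / 2) ^ k)) ?_
    (fun k (p : C k) => {y : Fin n → ℝ | qd p.1.1 y = p.1.2}) ?_ ?_
  · refine le_antisymm (key.trans ?_) zero_le
    have hlim : Filter.Tendsto (fun k : ℕ => ENNReal.ofReal (θ ^ k)) Filter.atTop (nhds 0) := by
      have := ENNReal.tendsto_ofReal (tendsto_pow_atTop_nhds_zero_of_lt_one hθ0.le hθ1)
      simpa using this
    rw [← hlim.liminf_eq]
    refine Filter.liminf_le_liminf (Filter.Eventually.of_forall fun k => ?_)
    refine le_trans ?_ (hlt k).le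
    rw [cost_eq_tsum]
    refine ENNReal.tsum_le_tsum fun p => ?_
    refine (ENNReal.rpow_le_rpow (hdiam p.1) ht.le).trans ?_
    rw [ENNReal.ofReal_rpow_of_nonneg (by positivity) ht.le]
    apply ENNReal.ofReal_le_ofReal
    rw [← Real.rpow_natCast, ← Real.rpow_natCast, ← Real.rpow_mul (by norm_num), hθ,
      ← Real.rpow_mul (by norm_num), one_div, Real.inv_rpow (by norm_num),
      ← Real.rpow_neg (by norm_num)]
    apply le_of_eq
    congr 1
    ring
  · have := ENNReal.tendsto_ofReal (tendsto_pow_atTop_nhds_zero_of_lt_one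
      (by norm_num : (0 : ℝ) ≤ 1 / 2) (by norm_num))
    simpa using this
  · refine Filter.Eventually.of_forall fun k p => (hdiam p.1).trans ?_
    exact ENNReal.ofReal_le_ofReal
      (pow_le_pow_of_le_one (by norm_num) (by norm_num) (hlev k p.1 p.2))
  · refine Filter.Eventually.of_forall fun k x hx => ?_
    obtain ⟨l, hl⟩ := hC k x hx
    exact Set.mem_iUnion.2 ⟨⟨_, hl⟩, rfl⟩

/-- Greedy choice of masses on a finite set: every point ends up in a dyadic cube of
level at most `j` whose mass is the largest one allowed. -/
lemma exists_tight {n : ℕ} {θ : ℝ} (hθ : 0 < θ) (j : ℕ) (T : Finset (Fin n → ℝ)) :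
    ∃ a : (Fin n → ℝ) → ℝ, (∀ y, 0 ≤ a y) ∧
      (∀ l ≤ j, ∀ x, ∑ y ∈ T with qd l y = qd l x, a y ≤ θ ^ l) ∧
      ∀ x ∈ T, ∃ l ≤ j, ∑ y ∈ T with qd l y = qd l x, a y = θ ^ l := by
  classical
  induction T using Finset.induction_on with
  | empty => exact ⟨0, by simp, fun l _ x => by simpa using by positivity, by simp⟩
  | insert z T hz ih =>
    obtain ⟨a, ha0, hle, htight⟩ := ih
    -- the room left in the cubes around `z`
    obtain ⟨l0, hl0, hmin⟩ := Finset.exists_min_image (Finset.range (j + 1))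
      (fun l => θ ^ l - ∑ y ∈ T with qd l y = qd l z, a y) ⟨0, by simp⟩
    set δ : ℝ := θ ^ l0 - ∑ y ∈ T with qd l0 y = qd l0 z, a y with hδ
    have hl0j : l0 ≤ j := Nat.lt_succ_iff.1 (Finset.mem_range.1 hl0)
    have hδ0 : 0 ≤ δ := sub_nonneg.2 (hle l0 hl0j z)
    have hsum : ∀ l x, ∑ y ∈ insert z T with qd l y = qd l x, Function.update a z δ y =
        (if qd l z = qd l x then δ else 0) + ∑ y ∈ T with qd l y = qd l x, a y := by
      intro l x
      have h1 : ∑ y ∈ T with qd l y = qd l x, Function.update a z δ y =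
          ∑ y ∈ T with qd l y = qd l x, a y := by
        refine Finset.sum_congr rfl fun y hy => ?_
        rw [Function.update_of_ne]
        rintro rfl
        exact hz (Finset.mem_filter.1 hy).1
      rw [Finset.filter_insert]
      split_ifs with h
      · rw [Finset.sum_insert (by simp [hz]), h1, Function.update_self]
      · rw [h1, zero_add]
    have hup : ∀ l ≤ j, ∀ x, ∑ y ∈ insert z T with qd l y = qd l x, Function.update a z δ y
        ≤ θ ^ l := by
      intro l hl x
      rw [hsum]
      split_ifs with h
      · have := hmin l (Finset.mem_range.2 (Nat.lt_succ_iff.2 hl))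
        rw [← h]
        linarith
      · rw [zero_add]; exact hle l hl x
    refine ⟨Function.update a z δ, ?_, hup, ?_⟩
    · intro y
      by_cases h : y = z
      · subst h; simpa using hδ0
      · rw [Function.update_of_ne h]; exact ha0 y
    · intro x hx
      rcases Finset.mem_insert.1 hx with rfl | hxT
      · refine ⟨l0, hl0j, ?_⟩
        rw [hsum, if_pos rfl, hδ]
        ring
      · obtain ⟨l, hl, heq⟩ := htight x hxT
        refine ⟨l, hl, le_antisymm (hup l hl x) ?_⟩
        rw [hsum, heq]
        split_ifs <;> linarith

/-- Discrete Frostman lemma at scale `2 ^ (-j)`: the total mass is at least the content because the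
tight cubes of `exists_tight` cover `S` and their weights add up to the mass. -/
lemma frostman {n : ℕ} {θ : ℝ} (hθ : 0 < θ) (j : ℕ) {S : Set (Fin n → ℝ)}
    {x₀ : Fin n → ℝ} (hS : S ⊆ closedBall x₀ 1) :
    ∃ T : Finset (Fin n → ℝ), (∀ y ∈ T, y ∈ S) ∧ ∃ a : (Fin n → ℝ) → ℝ, (∀ y, 0 ≤ a y) ∧
      (∀ l ≤ j, ∀ x, ∑ y ∈ T with dist y x ≤ (1 / 2) ^ l, a y ≤ 3 ^ n * θ ^ l) ∧
      content θ S ≤ ENNReal.ofReal (∑ y ∈ T, a y) ∧ ∑ y ∈ T, a y ≤ 3 ^ n := by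
  classical
  have hfin : (qd j '' S).Finite := by
    refine (Set.finite_Icc (fun i => ⌊(2 : ℝ) ^ j * (x₀ i - 1)⌋)
      (fun i => ⌊(2 : ℝ) ^ j * (x₀ i + 1)⌋)).subset ?_
    rintro _ ⟨y, hy, rfl⟩
    have h1 : ∀ i, |y i - x₀ i| ≤ 1 := fun i => by
      rw [← Real.dist_eq]
      exact (dist_le_pi_dist y x₀ i).trans (mem_closedBall.1 (hS hy))
    constructor
    · intro i
      have := abs_le.1 (h1 i)
      exact Int.floor_le_floor (by gcongr; linarith)
    · intro i
      have := abs_le.1 (h1 i)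
      exact Int.floor_le_floor (by gcongr; linarith)
  obtain ⟨T, hTS, hT⟩ := (Set.exists_subset_image_finite_and (f := qd j) (s := S)
    (p := fun t => t = qd j '' S)).1 ⟨_, subset_rfl, hfin, rfl⟩
  lift T to Finset (Fin n → ℝ) using hT.1
  obtain ⟨a, ha0, hle, htight⟩ := exists_tight hθ j T
  have hball : ∀ l ≤ j, ∀ x, ∑ y ∈ T with dist y x ≤ (1 / 2) ^ l, a y ≤ 3 ^ n * θ ^ l := by
    intro l hl x
    calc ∑ y ∈ T with dist y x ≤ (1 / 2) ^ l, a y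
        = ∑ q ∈ Finset.Icc (qd l x - 1) (qd l x + 1),
          ∑ y ∈ T.filter (fun y => dist y x ≤ (1 / 2) ^ l) with qd l y = q, a y := by
          rw [Finset.sum_fiberwise_of_maps_to]
          intro y hy
          exact qd_mem_Icc (Finset.mem_filter.1 hy).2
      _ ≤ ∑ q ∈ Finset.Icc (qd l x - 1) (qd l x + 1), θ ^ l := by
          refine Finset.sum_le_sum fun q _ => ?_
          by_cases hq : ∃ z, qd l z = q
          · obtain ⟨z, rfl⟩ := hq
            refine le_trans (Finset.sum_le_sum_of_subset_of_nonneg ?_ fun y _ _ => ha0 y)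
              (hle l hl z)
            intro y hy
            simp only [Finset.mem_filter] at hy ⊢
            exact ⟨hy.1.1, hy.2⟩
          · push Not at hq
            rw [Finset.filter_false_of_mem fun y _ => hq y]
            simpa using by positivity
      _ = 3 ^ n * θ ^ l := by
          rw [Finset.sum_const, card_Icc_qd, nsmul_eq_mul]
          push_cast
          rfl
  refine ⟨T, fun y hy => hTS hy, a, ha0, hball, ?_, ?_⟩
  · -- cover by the largest tight cubes
    have hex : ∀ x ∈ T, ∃ l, l ≤ j ∧ ∑ y ∈ T with qd l y = qd l x, a y = θ ^ l := htight
    set lv : (Fin n → ℝ) → ℕ := fun x => if h : ∃ l, l ≤ j ∧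
      ∑ y ∈ T with qd l y = qd l x, a y = θ ^ l then Nat.find h else 0 with hlv
    have hlv1 : ∀ x ∈ T, lv x ≤ j ∧ ∑ y ∈ T with qd (lv x) y = qd (lv x) x, a y = θ ^ (lv x) := by
      intro x hx
      simp only [hlv, dif_pos (hex x hx)]
      exact Nat.find_spec (hex x hx)
    have hlv2 : ∀ x ∈ T, ∀ l ≤ j, ∑ y ∈ T with qd l y = qd l x, a y = θ ^ l → lv x ≤ l := by
      intro x hx l hl h
      simp only [hlv, dif_pos (hex x hx)]
      exact Nat.find_min' (hex x hx) ⟨hl, h⟩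
    set C : Finset (ℕ × (Fin n → ℤ)) := T.image fun x => (lv x, qd (lv x) x) with hCdef
    have hcov : Cov (C : Set (ℕ × (Fin n → ℤ))) S := by
      intro x hx
      have hxi : qd j x ∈ qd j '' (T : Set (Fin n → ℝ)) := by
        rw [hT.2]; exact ⟨x, hx, rfl⟩
      obtain ⟨y, hy, hyx⟩ := hxi
      refine ⟨lv y, ?_⟩
      rw [Finset.mem_coe, hCdef, Finset.mem_image]
      exact ⟨y, hy, by rw [qd_nest (hlv1 y hy).1 hyx]⟩
    refine (content_le hcov).trans ?_
    rw [cost_finset, ← ENNReal.ofReal_sum_of_nonneg fun i _ => by positivity]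
    apply ENNReal.ofReal_le_ofReal
    -- two tight cubes at different levels through a common point coincide
    have huniq : ∀ x ∈ T, ∀ y ∈ T, qd (lv x) y = qd (lv x) x → lv y = lv x := by
      intro x hx y hy h
      have h1 : lv y ≤ lv x := hlv2 y hy _ (hlv1 x hx).1 (by rw [h]; exact (hlv1 x hx).2)
      refine le_antisymm h1 (hlv2 x hx _ (hlv1 y hy).1 ?_)
      rw [← qd_nest h1 h]
      exact (hlv1 y hy).2
    calc ∑ p ∈ C, θ ^ p.1 = ∑ p ∈ C, ∑ y ∈ T with (lv y, qd (lv y) y) = p, a y := by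
          refine Finset.sum_congr rfl fun p hp => ?_
          obtain ⟨x, hx, rfl⟩ := Finset.mem_image.1 hp
          rw [← (hlv1 x hx).2]
          refine Finset.sum_congr ?_ fun _ _ => rfl
          ext y
          simp only [Finset.mem_filter, Prod.mk.injEq, and_congr_right_iff]
          intro hy
          constructor
          · intro h
            have := huniq x hx y hy h
            exact ⟨this, by rw [this]; exact h⟩
          · rintro ⟨h1, h2⟩
            rw [h1] at h2; exact h2
      _ = ∑ y ∈ T, a y := by
          rw [Finset.sum_fiberwise_of_maps_to]
          intro y hy
          exact Finset.mem_image_of_mem _ hy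
      _ ≤ _ := le_rfl
  · have h := hball 0 (Nat.zero_le _) x₀
    rw [pow_zero, pow_zero, mul_one, Finset.filter_true_of_mem] at h
    · exact h
    · intro y hy
      exact mem_closedBall.1 (hS (hTS hy))

/-! ### Tent functions and correlations -/

lemma integrable_of_supp {E : Type} [NormedAddCommGroup E] [ProperSpace E] [MeasurableSpace E]
    [OpensMeasurableSpace E] {μ : Measure E} [IsFiniteMeasureOnCompacts μ] {f : E → ℝ}
    (hf : Continuous f) {R : ℝ} (h : ∀ x, R < ‖x‖ → f x = 0) : Integrable f μ := by
  refine hf.integrable_of_hasCompactSupport ?_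
  refine HasCompactSupport.intro (isCompact_closedBall (0 : E) R) fun x hx => h x ?_
  simpa using hx

/-- The integral of the unit tent function. -/
noncomputable def tentInt (d : ℕ) : ℝ := ∫ u : Fin d → ℝ, max (1 - ‖u‖) 0

lemma tentInt_pos (d : ℕ) : 0 < tentInt d := by
  have hc : Continuous fun u : Fin d → ℝ => max (1 - ‖u‖) 0 := by fun_prop
  refine hc.integral_pos_of_hasCompactSupport_nonneg_nonzero ?_ (fun u => le_max_right _ _)
    (x := 0) (by simp)
  refine HasCompactSupport.intro (isCompact_closedBall (0 : Fin d → ℝ) 1) fun x hx => ?_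
  have : 1 < ‖x‖ := by simpa using hx
  exact max_eq_right (by linarith)

/-- The tent function of radius `r`, normalized to have integral one. -/
noncomputable def phi {d : ℕ} (r : ℝ) (u : Fin d → ℝ) : ℝ :=
  (r ^ d * tentInt d)⁻¹ * max (1 - ‖u‖ / r) 0

lemma phi_cont {d : ℕ} (r : ℝ) : Continuous (phi (d := d) r) := by
  unfold phi; fun_prop

lemma phi_nonneg {d : ℕ} {r : ℝ} (hr : 0 < r) (u : Fin d → ℝ) : 0 ≤ phi r u := by
  have := tentInt_pos d
  unfold phi; positivity

lemma phi_supp {d : ℕ} {r : ℝ} (hr : 0 < r) (u : Fin d → ℝ) (h : r < ‖u‖) : phi r u = 0 := by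
  unfold phi
  rw [max_eq_right, mul_zero]
  rw [sub_nonpos, one_le_div hr]
  exact h.le

lemma phi_le {d : ℕ} {r : ℝ} (hr : 0 < r) (u : Fin d → ℝ) :
    phi r u ≤ (r ^ d * tentInt d)⁻¹ := by
  have := tentInt_pos d
  unfold phi
  apply mul_le_of_le_one_right (by positivity)
  apply max_le _ zero_le_one
  have : 0 ≤ ‖u‖ / r := by positivity
  linarith

lemma phi_int {d : ℕ} {r : ℝ} (hr : 0 < r) : ∫ u : Fin d → ℝ, phi r u = 1 := by
  have h := Measure.integral_comp_inv_smul (volume : Measure (Fin d → ℝ))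
    (fun u => max (1 - ‖u‖) 0) r
  have h2 : ∀ u : Fin d → ℝ, ‖r⁻¹ • u‖ = ‖u‖ / r := fun u => by
    rw [norm_smul, norm_inv, Real.norm_of_nonneg hr.le]; field_simp
  simp only [h2] at h
  unfold phi
  rw [integral_const_mul, h, Module.finrank_pi, Fintype.card_fin, abs_of_pos (by positivity)]
  have := tentInt_pos d
  change (r ^ d * tentInt d)⁻¹ * (r ^ d • tentInt d) = 1
  rw [smul_eq_mul]
  field_simp

lemma phi_neg {d : ℕ} (r : ℝ) (u : Fin d → ℝ) : phi r (-u) = phi r u := by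
  simp [phi]

lemma phi_half {d : ℕ} {r : ℝ} (hr : 0 < r) (u : Fin d → ℝ) :
    phi (r / 2) u ≤ 2 ^ d * phi r u := by
  have := tentInt_pos d
  unfold phi
  rw [show ((r / 2) ^ d * tentInt d)⁻¹ = 2 ^ d * (r ^ d * tentInt d)⁻¹ by
    rw [div_pow]; field_simp, mul_assoc]
  gcongr
  linarith

/-- The correlation of two functions on `ℝ^d`. -/
noncomputable def corr {d : ℕ} (α β : (Fin d → ℝ) → ℝ) (z : Fin d → ℝ) : ℝ :=
  ∫ u, α (u - z) * β u

/-- Continuous functions supported in the closed ball of radius `r`. -/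
structure Bmp {d : ℕ} (r : ℝ) (α : (Fin d → ℝ) → ℝ) : Prop where
  cont : Continuous α
  supp : ∀ u, r < ‖u‖ → α u = 0

lemma corr_shift {d : ℕ} (α β : (Fin d → ℝ) → ℝ) (a b : Fin d → ℝ) :
    ∫ u, α (u - a) * β (u - b) = corr α β (a - b) := by
  unfold corr
  rw [← integral_add_right_eq_self _ b]
  congr 1
  ext u
  rw [add_sub_cancel_right, show u + b - a = u - (a - b) by abel]

lemma corr_comm {d : ℕ} (α β : (Fin d → ℝ) → ℝ) (hα : ∀ u, α (-u) = α u)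
    (hβ : ∀ u, β (-u) = β u) (z : Fin d → ℝ) : corr α β z = corr β α z := by
  unfold corr
  rw [← integral_sub_left_eq_self _ volume z]
  congr 1
  ext u
  rw [show z - u - z = -u by abel, hα, ← hβ (z - u), neg_sub, mul_comm]

lemma corr_cont {d : ℕ} {r : ℝ} {α β : (Fin d → ℝ) → ℝ} (hα : Bmp r α) (hβ : Bmp r β) :
    Continuous (corr α β) := by
  have h : corr α β = fun z => ∫ u in closedBall (0 : Fin d → ℝ) r, α (u - z) * β u := by
    ext z
    rw [setIntegral_eq_integral_of_forall_compl_eq_zero]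
    · rfl
    · intro u hu
      rw [hβ.supp u (by simpa using hu), mul_zero]
  rw [h]
  apply continuous_parametric_integral_of_continuous
  · have := hα.cont
    have := hβ.cont
    fun_prop
  · exact isCompact_closedBall _ _

lemma corr_supp {d : ℕ} {r : ℝ} {α β : (Fin d → ℝ) → ℝ} (hα : Bmp r α) (hβ : Bmp r β)
    (z : Fin d → ℝ) (hz : 2 * r < ‖z‖) : corr α β z = 0 := by
  unfold corr
  apply integral_eq_zero_of_ae
  refine Filter.Eventually.of_forall fun u => ?_
  simp only [Pi.zero_apply]
  by_cases hu : r < ‖u‖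
  · rw [hβ.supp u hu, mul_zero]
  · rw [hα.supp, zero_mul]
    have := norm_sub_norm_le z u
    rw [norm_sub_rev] at this
    linarith

lemma Bmp.integrable {d : ℕ} {r : ℝ} {α : (Fin d → ℝ) → ℝ} (hα : Bmp r α) :
    Integrable α := integrable_of_supp hα.cont hα.supp

lemma corr_int {d : ℕ} {r : ℝ} {α β : (Fin d → ℝ) → ℝ} (hα : Bmp r α) (hβ : Bmp r β) :
    ∫ z, corr α β z = (∫ u, α u) * ∫ u, β u := by
  unfold corr
  rw [integral_integral_swap]
  · have : ∀ u, ∫ z, α (u - z) * β u = (∫ z, α z) * β u := by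
      intro u
      rw [integral_mul_const, integral_sub_left_eq_self]
    simp only [this]
    rw [integral_const_mul]
  · refine integrable_of_supp (R := 2 * |r|) ?_ ?_
    · have := hα.cont
      have := hβ.cont
      simp only [Function.uncurry_def]
      fun_prop
    · rintro ⟨z, u⟩ h
      simp only [Function.uncurry_apply_pair]
      by_cases hu : r < ‖u‖
      · rw [hβ.supp u hu, mul_zero]
      · rw [hα.supp, zero_mul]
        push Not at hu
        have h0 := le_abs_self r
        have h1 := norm_sub_norm_le z u
        rw [norm_sub_rev] at h1
        rw [Prod.norm_mk, lt_max_iff] at h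
        rcases h with h | h
        · linarith
        · have := abs_nonneg r
          linarith

lemma corr_abs_le {d : ℕ} {r B : ℝ} {α β : (Fin d → ℝ) → ℝ} (hβ : Bmp r β)
    (hα : Bmp r α) (hB : ∀ u, |α u| ≤ B) (z : Fin d → ℝ) :
    |corr α β z| ≤ B * ∫ u, |β u| := by
  unfold corr
  rw [← integral_const_mul]
  refine (abs_integral_le_integral_abs).trans ?_
  have h1 := hα.cont
  have h2 := hβ.cont
  refine integral_mono (integrable_of_supp (R := r) (by fun_prop) fun u hu => ?_)
    (integrable_of_supp (R := r) (by fun_prop) fun u hu => ?_) fun u => ?_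
  · simp [hβ.supp u hu]
  · simp [hβ.supp u hu]
  · simp only [abs_mul]
    gcongr
    exact hB _

lemma phi_bmp {d : ℕ} {r : ℝ} (hr : 0 < r) : Bmp (d := d) r (phi r) :=
  ⟨phi_cont r, phi_supp hr⟩

lemma Bmp.mono {d : ℕ} {r r' : ℝ} {α : (Fin d → ℝ) → ℝ} (hα : Bmp r α) (h : r ≤ r') :
    Bmp r' α := ⟨hα.cont, fun u hu => hα.supp u (h.trans_lt hu)⟩

/-- The difference of two consecutive tent functions; it has integral zero. -/
noncomputable def psi {d : ℕ} (r : ℝ) (u : Fin d → ℝ) : ℝ := phi (r / 2) u - phi r u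

lemma psi_bmp {d : ℕ} {r : ℝ} (hr : 0 < r) : Bmp (d := d) r (psi r) := by
  refine ⟨(phi_cont _).sub (phi_cont _), fun u hu => ?_⟩
  unfold psi
  rw [phi_supp hr u hu, phi_supp (half_pos hr) u (by linarith), sub_zero]

lemma psi_int {d : ℕ} {r : ℝ} (hr : 0 < r) : ∫ u : Fin d → ℝ, psi r u = 0 := by
  unfold psi
  rw [integral_sub (phi_bmp (half_pos hr)).integrable (phi_bmp hr).integrable,
    phi_int hr, phi_int (half_pos hr), sub_self]

lemma psi_abs_le {d : ℕ} {r : ℝ} (hr : 0 < r) (u : Fin d → ℝ) :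
    |psi r u| ≤ (2 ^ d + 1) * phi r u := by
  have h1 := phi_half hr u
  have h2 := phi_nonneg hr u
  have h3 := phi_nonneg (half_pos hr) u
  have h4 : 0 ≤ (2 : ℝ) ^ d * phi r u := by positivity
  unfold psi
  rw [abs_le]
  constructor <;> nlinarith

/-! ### Kernels of the weighted X-ray transform -/

/-- The Lipschitz cutoff on the space of slopes. -/
noncomputable def wt {d : ℕ} (M : ℝ) (v : Fin d → ℝ) : ℝ := max (M - ‖v‖) 0

lemma wt_cont {d : ℕ} (M : ℝ) : Continuous (wt (d := d) M) := by unfold wt; fun_prop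

lemma wt_nonneg {d : ℕ} (M : ℝ) (v : Fin d → ℝ) : 0 ≤ wt M v := le_max_right _ _

lemma wt_le {d : ℕ} {M : ℝ} (hM : 0 ≤ M) (v : Fin d → ℝ) : wt M v ≤ M :=
  max_le (by have := norm_nonneg v; linarith) hM

lemma wt_supp {d : ℕ} (M : ℝ) (v : Fin d → ℝ) (h : M < ‖v‖) : wt M v = 0 :=
  max_eq_right (by linarith)

lemma wt_lip {d : ℕ} (M : ℝ) (v v' : Fin d → ℝ) : |wt M v - wt M v'| ≤ ‖v - v'‖ := by
  unfold wt
  refine (abs_max_sub_max_le_abs _ _ _).trans ?_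
  rw [show M - ‖v‖ - (M - ‖v'‖) = -(‖v‖ - ‖v'‖) by ring, abs_neg]
  exact abs_norm_sub_norm_le v v'

lemma integral_line {d : ℕ} (Ψ : (Fin d → ℝ) → ℝ) (a : Fin d → ℝ) (τ : ℝ) :
    ∫ v, Ψ (a - τ • v) = |(τ ^ d)⁻¹| * ∫ z, Ψ z := by
  have h := Measure.integral_comp_smul (volume : Measure (Fin d → ℝ)) (fun z => Ψ (a - z)) τ
  rw [integral_sub_left_eq_self, Module.finrank_pi, Fintype.card_fin, smul_eq_mul] at h
  exact h

lemma abs_integral_le_ball {d : ℕ} {f : (Fin d → ℝ) → ℝ} {c : Fin d → ℝ} {R B : ℝ} (hR : 0 ≤ R)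
    (hB : ∀ v ∈ closedBall c R, |f v| ≤ B) (hs : ∀ v, v ∉ closedBall c R → f v = 0) :
    |∫ v, f v| ≤ B * (2 * R) ^ d := by
  rw [← setIntegral_eq_integral_of_forall_compl_eq_zero hs, ← Real.norm_eq_abs]
  refine (norm_setIntegral_le_of_norm_le_const (measure_closedBall_lt_top) hB).trans ?_
  rw [measureReal_def, Real.volume_pi_closedBall _ hR, Fintype.card_fin,
    ENNReal.toReal_ofReal (by positivity)]

section kernel
variable {d : ℕ} {r M B : ℝ} {Ψ : (Fin d → ℝ) → ℝ}

lemma kernel_near (hM : 1 ≤ M) (hB : ∀ z, |Ψ z| ≤ B) (a : Fin d → ℝ) (τ : ℝ) :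
    |∫ v, wt M v * Ψ (a - τ • v)| ≤ M * B * (2 * M) ^ d := by
  have hB0 : 0 ≤ B := (abs_nonneg _).trans (hB 0)
  refine abs_integral_le_ball (c := 0) (by linarith) (fun v _ => ?_) fun v hv => ?_
  · rw [abs_mul, abs_of_nonneg (wt_nonneg _ _)]
    gcongr
    · exact wt_le (by linarith) v
    · exact hB _
  · rw [wt_supp M v (by simpa using hv), zero_mul]

/-- If some line with slope in the support of the cutoff passes close to a point, then the point
is not nearly horizontal. -/
lemma tau_large (hM : 1 ≤ M) (hΨ : ∀ z, 2 * r < ‖z‖ → Ψ z = 0) {a : Fin d → ℝ} {τ ρ : ℝ}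
    (hρr : 4 * r < ρ) (hρ : ρ ≤ max ‖a‖ |τ|) {v : Fin d → ℝ} (hv : wt M v * Ψ (a - τ • v) ≠ 0) :
    ρ / (2 * M) ≤ |τ| := by
  have h1 : ‖v‖ ≤ M := by
    by_contra! h
    exact hv (by rw [wt_supp M v h, zero_mul])
  have h2 : ‖a - τ • v‖ ≤ 2 * r := by
    by_contra! h
    exact hv (by rw [hΨ _ h, mul_zero])
  have h3 := norm_sub_norm_le a (τ • v)
  rw [norm_smul, Real.norm_eq_abs] at h3
  have h4 : |τ| * ‖v‖ ≤ |τ| * M := by gcongr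
  have h5 : |τ| ≤ |τ| * M := le_mul_of_one_le_right (abs_nonneg _) hM
  rw [div_le_iff₀ (by linarith)]
  rcases le_max_iff.1 hρ with h | h <;> nlinarith [abs_nonneg τ]

lemma not_mem_ball {a v : Fin d → ℝ} {τ : ℝ} (hτ : τ ≠ 0)
    (hv : v ∉ closedBall (τ⁻¹ • a) (2 * r / |τ|)) : 2 * r < ‖a - τ • v‖ := by
  rw [mem_closedBall, not_le, dist_eq_norm, div_lt_iff₀ (abs_pos.2 hτ), norm_sub_rev] at hv
  have : a - τ • v = τ • (τ⁻¹ • a - v) := by rw [smul_sub, smul_inv_smul₀ hτ]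
  rw [this, norm_smul, Real.norm_eq_abs, mul_comm |τ|]
  exact hv

lemma kernel_far (hr : 0 < r) (hM : 1 ≤ M) (hB : ∀ z, |Ψ z| ≤ B)
    (hΨ : ∀ z, 2 * r < ‖z‖ → Ψ z = 0) {a : Fin d → ℝ} {τ ρ : ℝ}
    (hρr : 4 * r < ρ) (hρ : ρ ≤ max ‖a‖ |τ|) :
    |∫ v, wt M v * Ψ (a - τ • v)| ≤ M * B * (8 * M * (r / ρ)) ^ d := by
  have hB0 : 0 ≤ B := (abs_nonneg _).trans (hB 0)
  have hρ0 : 0 < ρ := by linarith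
  by_cases hz : ∀ v, wt M v * Ψ (a - τ • v) = 0
  · simp only [hz, integral_zero, abs_zero]
    positivity
  push Not at hz
  obtain ⟨v0, hv0⟩ := hz
  have hτ := tau_large hM hΨ hρr hρ hv0
  have hτ0 : 0 < |τ| := lt_of_lt_of_le (by positivity) hτ
  have hτ' : τ ≠ 0 := abs_pos.1 hτ0
  refine (abs_integral_le_ball (c := τ⁻¹ • a) (R := 2 * r / |τ|) (B := M * B) (by positivity)
    (fun v _ => ?_) fun v hv => ?_).trans ?_
  · rw [abs_mul, abs_of_nonneg (wt_nonneg _ _)]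
    gcongr
    · exact wt_le (by linarith) v
    · exact hB _
  · rw [hΨ _ (not_mem_ball hτ' hv), mul_zero]
  · have hrad : 2 * r / |τ| ≤ 4 * M * (r / ρ) := by
      calc 2 * r / |τ| ≤ 2 * r / (ρ / (2 * M)) := by gcongr
        _ = _ := by field_simp; norm_num
    calc M * B * (2 * (2 * r / |τ|)) ^ d
        ≤ M * B * (2 * (4 * M * (r / ρ))) ^ d := by gcongr
      _ = _ := by ring

/-- For a kernel of integral zero the Lipschitz cutoff yields one more power of decay. -/
lemma kernel_far_cancel (hr : 0 < r) (hM : 1 ≤ M) (hc : Continuous Ψ) (hB : ∀ z, |Ψ z| ≤ B)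
    (hΨ : ∀ z, 2 * r < ‖z‖ → Ψ z = 0) (h0 : ∫ z, Ψ z = 0) {a : Fin d → ℝ} {τ ρ : ℝ}
    (hρr : 4 * r < ρ) (hρ : ρ ≤ max ‖a‖ |τ|) :
    |∫ v, wt M v * Ψ (a - τ • v)| ≤ B * (8 * M * (r / ρ)) ^ (d + 1) := by
  have hB0 : 0 ≤ B := (abs_nonneg _).trans (hB 0)
  have hρ0 : 0 < ρ := by linarith
  by_cases hz : ∀ v, wt M v * Ψ (a - τ • v) = 0
  · simp only [hz, integral_zero, abs_zero]
    positivity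
  push Not at hz
  obtain ⟨v0, hv0⟩ := hz
  have hτ := tau_large hM hΨ hρr hρ hv0
  have hτ0 : 0 < |τ| := lt_of_lt_of_le (by positivity) hτ
  have hτ' : τ ≠ 0 := abs_pos.1 hτ0
  have hintg : ∀ g : (Fin d → ℝ) → ℝ, Continuous g →
      Integrable fun v => g v * Ψ (a - τ • v) := by
    intro g hg
    refine integrable_of_supp (R := ‖τ⁻¹ • a‖ + 2 * r / |τ|) (by fun_prop) fun v hv => ?_
    rw [hΨ _ (not_mem_ball hτ' _), mul_zero]
    rw [mem_closedBall, not_le, dist_eq_norm]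
    have := norm_sub_norm_le v (τ⁻¹ • a)
    linarith
  have hsub : ∫ v, wt M v * Ψ (a - τ • v) =
      ∫ v, (wt M v - wt M (τ⁻¹ • a)) * Ψ (a - τ • v) := by
    have h1 : ∫ v, wt M (τ⁻¹ • a) * Ψ (a - τ • v) = 0 := by
      rw [integral_const_mul, integral_line, h0, mul_zero, mul_zero]
    simp only [sub_mul]
    rw [integral_sub (hintg _ (wt_cont M)) (hintg _ continuous_const), h1, sub_zero]
  have hrad : 2 * r / |τ| ≤ 4 * M * (r / ρ) := by
    calc 2 * r / |τ| ≤ 2 * r / (ρ / (2 * M)) := by gcongr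
      _ = _ := by field_simp; norm_num
  rw [hsub]
  refine (abs_integral_le_ball (c := τ⁻¹ • a) (R := 2 * r / |τ|) (B := (2 * r / |τ|) * B)
    (by positivity) (fun v hv => ?_) fun v hv => ?_).trans ?_
  · rw [abs_mul]
    gcongr
    · refine (wt_lip M _ _).trans ?_
      rw [← dist_eq_norm]
      exact hv
    · exact hB _
  · rw [hΨ _ (not_mem_ball hτ' hv), mul_zero]
  · calc 2 * r / |τ| * B * (2 * (2 * r / |τ|)) ^ d
        ≤ (4 * M * (r / ρ)) * B * (2 * (4 * M * (r / ρ))) ^ d := by gcongr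
      _ = (4 * M * (r / ρ)) * (B * (8 * M * (r / ρ)) ^ d) := by ring
      _ ≤ (8 * M * (r / ρ)) * (B * (8 * M * (r / ρ)) ^ d) := by
          gcongr; norm_num
      _ = _ := by ring

/-- A bound for a kernel at scale `r = 2 ^ (-j)`, in terms of the scale of the distance. -/
lemma kernel_scale (p : ℕ) (hp : p ≤ d + 1) (j l : ℕ) (hlj : l ≤ j) (hM : 1 ≤ M)
    (hB0 : 0 ≤ B) {a : Fin d → ℝ} {τ I : ℝ} (hnear : |I| ≤ M * B * (2 * M) ^ d)
    (hfar : ∀ ρ, 4 * (1 / 2) ^ j < ρ → ρ ≤ max ‖a‖ |τ| →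
      |I| ≤ M * B * (8 * M * ((1 / 2) ^ j / ρ)) ^ p)
    (hl : l = j ∨ (1 / 2) ^ (l + 1) < max ‖a‖ |τ|) :
    |I| ≤ M * (16 * M) ^ (d + 1) * B * ((1 / 2) ^ p) ^ (j - l) := by
  have hMB : 0 ≤ M * B := by positivity
  by_cases hcase : (1 / 2 : ℝ) ^ (l + 1) ≤ 4 * (1 / 2) ^ j
  · -- then `l ≥ j - 3` and the trivial bound suffices
    have hjl : j - l ≤ 3 := by
      by_contra! h
      have : (1 / 2 : ℝ) ^ j ≤ (1 / 2) ^ (l + 4) :=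
        pow_le_pow_of_le_one (by norm_num) (by norm_num) (by omega)
      have h3 : (0 : ℝ) < (1 / 2) ^ l := by positivity
      rw [pow_add] at this hcase
      norm_num at this hcase
      linarith
    have h8 : (1 : ℝ) ≤ 8 ^ p * ((1 / 2) ^ p) ^ (j - l) := by
      calc (1 : ℝ) = 8 ^ p * ((1 / 2) ^ p) ^ 3 := by
            rw [← pow_mul, mul_comm p 3, pow_mul, ← mul_pow]; norm_num
        _ ≤ _ := by
          gcongr ?_ * ?_
          exact pow_le_pow_of_le_one (by positivity)
            (pow_le_one₀ (by norm_num) (by norm_num)) hjl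
    have h9 : (8 : ℝ) ^ p ≤ 8 ^ (d + 1) := pow_le_pow_right₀ (by norm_num) hp
    have h10 : (2 * M) ^ d ≤ (2 * M) ^ (d + 1) :=
      pow_le_pow_right₀ (by linarith) (Nat.le_succ d)
    calc |I| ≤ M * B * (2 * M) ^ d := hnear
      _ ≤ M * B * (2 * M) ^ (d + 1) * 1 := by rw [mul_one]; gcongr
      _ ≤ M * B * (2 * M) ^ (d + 1) * (8 ^ (d + 1) * ((1 / 2) ^ p) ^ (j - l)) := by
          gcongr
          exact h8.trans (by gcongr)
      _ = _ := by rw [show 16 * M = (2 * M) * 8 by ring, mul_pow (2 * M) 8]; ring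
  · push Not at hcase
    have hl' : (1 / 2) ^ (l + 1) < max ‖a‖ |τ| := by
      rcases hl with rfl | h
      · exfalso
        have h3 : (0 : ℝ) < (1 / 2) ^ l := by positivity
        rw [pow_succ] at hcase
        linarith
      · exact h
    have h1 := hfar _ hcase hl'.le
    have h2 : (1 / 2 : ℝ) ^ j / (1 / 2) ^ (l + 1) = 2 * (1 / 2) ^ (j - l) := by
      rw [div_eq_iff (by positivity)]
      have : (1 / 2 : ℝ) ^ j = (1 / 2) ^ (j - l) * (1 / 2) ^ l := by
        rw [← pow_add]; congr 1; omega
      rw [this, pow_succ]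
      ring
    rw [h2] at h1
    calc |I| ≤ M * B * (8 * M * (2 * (1 / 2) ^ (j - l))) ^ p := h1
      _ = M * B * (16 * M) ^ p * ((1 / 2) ^ p) ^ (j - l) := by
          rw [← pow_mul, mul_comm p, pow_mul, mul_assoc (M * B), ← mul_pow]
          congr 2; ring
      _ ≤ M * B * (16 * M) ^ (d + 1) * ((1 / 2) ^ p) ^ (j - l) := by
          gcongr
          linarith
      _ = _ := by ring

end kernel

/-! ### Energy sums -/

/-- An energy sum over a family of weights with Frostman-type ball bounds, for a kernel which
decays geometrically in the scale of the distance. -/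
lemma energy_sum {n : ℕ} {θ q C : ℝ} (hq : 0 < q) (hqθ : q < θ) (hC : 0 ≤ C) (j : ℕ)
    (T : Finset (Fin n → ℝ)) (hT : ∀ x ∈ T, ∀ y ∈ T, dist x y ≤ 1) (b : (Fin n → ℝ) → ℝ)
    (hb : ∀ y, 0 ≤ b y)
    (hball : ∀ l ≤ j, ∀ x, ∑ y ∈ T with dist y x ≤ (1 / 2) ^ l, b y ≤ 3 ^ n * θ ^ l)
    (htot : ∑ y ∈ T, b y ≤ 3 ^ n) (K : (Fin n → ℝ) → (Fin n → ℝ) → ℝ)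
    (hK : ∀ x y, ∀ l ≤ j, (l = j ∨ (1 / 2) ^ (l + 1) < dist x y) →
      |K x y| ≤ C * q ^ (j - l)) :
    ∑ x ∈ T, ∑ y ∈ T, b x * b y * K x y ≤ 9 ^ n * C / (1 - q / θ) * θ ^ j := by
  classical
  have hθ : 0 < θ := hq.trans hqθ
  -- for each pair only the term with `2 ^ (-l)` comparable to the distance is needed
  have hpt : ∀ x ∈ T, ∀ y ∈ T, K x y ≤ ∑ l ∈ Finset.range (j + 1),
      if dist y x ≤ (1 / 2) ^ l then C * q ^ (j - l) else 0 := by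
    intro x hx y hy
    set l := Nat.findGreatest (fun l => dist y x ≤ (1 / 2 : ℝ) ^ l) j with hl
    have hlj : l ≤ j := Nat.findGreatest_le j
    have hl0 : dist y x ≤ (1 / 2 : ℝ) ^ l :=
      Nat.findGreatest_spec (P := fun l => dist y x ≤ (1 / 2 : ℝ) ^ l) (Nat.zero_le j)
        (by simpa using hT y hy x hx)
    have h1 : |K x y| ≤ C * q ^ (j - l) := by
      refine hK x y l hlj ?_
      by_cases h : l = j
      · exact Or.inl h
      · right
        rw [dist_comm]
        exact not_le.1 (Nat.findGreatest_is_greatest (Nat.lt_succ_self l) (by omega))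
    refine (le_abs_self _).trans (h1.trans ?_)
    have := Finset.single_le_sum (f := fun l => if dist y x ≤ (1 / 2 : ℝ) ^ l
      then C * q ^ (j - l) else 0) (fun i _ => by split_ifs <;> positivity)
      (Finset.mem_range.2 (Nat.lt_succ_of_le hlj))
    simpa only [hl0, if_true] using this
  have hgeom : ∑ l ∈ Finset.range (j + 1), q ^ (j - l) * θ ^ l ≤ θ ^ j / (1 - q / θ) := by
    have h1 : ∀ l ∈ Finset.range (j + 1), q ^ (j - l) * θ ^ l = θ ^ j * (q / θ) ^ (j - l) := by
      intro l hl
      have hl' : l ≤ j := Nat.lt_succ_iff.1 (Finset.mem_range.1 hl)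
      rw [div_pow]
      have : θ ^ j = θ ^ (j - l) * θ ^ l := by rw [← pow_add]; congr 1; omega
      rw [this]
      field_simp
    rw [Finset.sum_congr rfl h1, ← Finset.mul_sum, div_eq_mul_inv (θ ^ j)]
    refine mul_le_mul_of_nonneg_left ?_ (by positivity)
    have h2 := Finset.sum_range_reflect (fun l => (q / θ) ^ l) (j + 1)
    simp only [add_tsub_cancel_right] at h2
    rw [h2]
    have h0 : 0 ≤ q / θ := by positivity
    have h3 : q / θ < 1 := (div_lt_one hθ).2 hqθ
    rw [← tsum_geometric_of_lt_one h0 h3]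
    exact (summable_geometric_of_lt_one h0 h3).sum_le_tsum _ fun i _ => by positivity
  have h10 : 0 ≤ 1 - q / θ := by
    have : q / θ < 1 := (div_lt_one hθ).2 hqθ
    linarith
  calc ∑ x ∈ T, ∑ y ∈ T, b x * b y * K x y
      ≤ ∑ x ∈ T, ∑ y ∈ T, b x * b y * ∑ l ∈ Finset.range (j + 1),
        if dist y x ≤ (1 / 2) ^ l then C * q ^ (j - l) else 0 := by
        refine Finset.sum_le_sum fun x hx => Finset.sum_le_sum fun y hy => ?_
        exact mul_le_mul_of_nonneg_left (hpt x hx y hy) (mul_nonneg (hb x) (hb y))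
    _ = ∑ x ∈ T, b x * ∑ l ∈ Finset.range (j + 1), C * q ^ (j - l) *
        ∑ y ∈ T with dist y x ≤ (1 / 2) ^ l, b y := by
        refine Finset.sum_congr rfl fun x hx => ?_
        simp only [Finset.mul_sum, Finset.sum_filter]
        rw [Finset.sum_comm]
        refine Finset.sum_congr rfl fun l hl => Finset.sum_congr rfl fun y hy => ?_
        split_ifs <;> ring
    _ ≤ ∑ x ∈ T, b x * ∑ l ∈ Finset.range (j + 1), C * q ^ (j - l) * (3 ^ n * θ ^ l) := by
        refine Finset.sum_le_sum fun x hx => mul_le_mul_of_nonneg_left ?_ (hb x)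
        refine Finset.sum_le_sum fun l hl => mul_le_mul_of_nonneg_left ?_ (by positivity)
        exact hball l (Nat.lt_succ_iff.1 (Finset.mem_range.1 hl)) x
    _ = (∑ x ∈ T, b x) * (C * 3 ^ n * ∑ l ∈ Finset.range (j + 1), q ^ (j - l) * θ ^ l) := by
        rw [Finset.sum_mul]
        refine Finset.sum_congr rfl fun x hx => ?_
        rw [Finset.mul_sum _ _ (C * 3 ^ n)]
        congr 1
        exact Finset.sum_congr rfl fun l hl => by ring
    _ ≤ 3 ^ n * (C * 3 ^ n * (θ ^ j / (1 - q / θ))) := by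
        have h0 : 0 ≤ ∑ l ∈ Finset.range (j + 1), q ^ (j - l) * θ ^ l :=
          Finset.sum_nonneg fun l _ => by positivity
        gcongr
    _ = _ := by rw [show (9 : ℝ) = 3 * 3 by norm_num, mul_pow]; ring

/-! ### Projections along lines of a given slope -/

/-- The coordinates of `z` other than the one with index `i₀`. -/
def tl {d : ℕ} (i₀ : Fin (d + 1)) (z : Fin (d + 1) → ℝ) : Fin d → ℝ := fun k => z (i₀.succAbove k)

/-- The projection of `z` to the hyperplane `z i₀ = 0` along the line with slope `v`. -/
def pr {d : ℕ} (i₀ : Fin (d + 1)) (v : Fin d → ℝ) (z : Fin (d + 1) → ℝ) : Fin d → ℝ :=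
  tl i₀ z - z i₀ • v

lemma tl_sub {d : ℕ} (i₀ : Fin (d + 1)) (x y : Fin (d + 1) → ℝ) :
    tl i₀ (x - y) = tl i₀ x - tl i₀ y := rfl

lemma pr_sub {d : ℕ} (i₀ : Fin (d + 1)) (v : Fin d → ℝ) (x y : Fin (d + 1) → ℝ) :
    pr i₀ v (x - y) = pr i₀ v x - pr i₀ v y := by
  unfold pr
  rw [tl_sub, Pi.sub_apply, sub_smul]
  abel

lemma tl_cont {d : ℕ} (i₀ : Fin (d + 1)) : Continuous (tl i₀) := by
  unfold tl; fun_prop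

lemma pr_cont {d : ℕ} (i₀ : Fin (d + 1)) (z : Fin (d + 1) → ℝ) :
    Continuous fun v => pr i₀ v z := by
  unfold pr; fun_prop

lemma norm_tl_le {d : ℕ} (i₀ : Fin (d + 1)) (z : Fin (d + 1) → ℝ) : ‖tl i₀ z‖ ≤ ‖z‖ :=
  (pi_norm_le_iff_of_nonneg (norm_nonneg _)).2 fun k => norm_le_pi_norm z (i₀.succAbove k)

lemma norm_le_tl {d : ℕ} (i₀ : Fin (d + 1)) (z : Fin (d + 1) → ℝ) :
    ‖z‖ ≤ max ‖tl i₀ z‖ |z i₀| := by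
  refine (pi_norm_le_iff_of_nonneg (le_max_of_le_right (abs_nonneg _))).2 fun i => ?_
  rcases Fin.eq_self_or_eq_succAbove i₀ i with rfl | ⟨k, rfl⟩
  · exact le_max_right _ _
  · exact le_max_of_le_left (norm_le_pi_norm (tl i₀ z) k)

lemma norm_pr_le {d : ℕ} (i₀ : Fin (d + 1)) (v : Fin d → ℝ) (z : Fin (d + 1) → ℝ) :
    ‖pr i₀ v z‖ ≤ ‖z‖ + ‖z‖ * ‖v‖ := by
  unfold pr
  refine (norm_sub_le _ _).trans ?_
  rw [norm_smul]
  gcongr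
  · exact norm_tl_le i₀ z
  · exact norm_le_pi_norm z i₀

section
variable {d : ℕ} {i₀ : Fin (d + 1)} {r M : ℝ} {α β : (Fin d → ℝ) → ℝ}

lemma bmp_line_cont (hα : Bmp r α) (x : Fin (d + 1) → ℝ) :
    Continuous fun p : (Fin d → ℝ) × (Fin d → ℝ) => α (p.2 - pr i₀ p.1 x) := by
  have h1 := hα.cont
  have h2 := (pr_cont i₀ x).comp (continuous_fst (X := Fin d → ℝ) (Y := Fin d → ℝ))
  exact h1.comp (continuous_snd.sub h2)

lemma integrable_line (hM : 0 ≤ M) (hα : Bmp r α) (x : Fin (d + 1) → ℝ)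
    {h : (Fin d → ℝ) × (Fin d → ℝ) → ℝ} (hh : Continuous h) :
    Integrable fun p => wt M p.1 * (α (p.2 - pr i₀ p.1 x) * h p) := by
  have h1 := bmp_line_cont (i₀ := i₀) hα x
  have h2 := (wt_cont (d := d) M).comp (continuous_fst (X := Fin d → ℝ) (Y := Fin d → ℝ))
  refine integrable_of_supp (h2.mul (h1.mul hh)) (R := M + |r| + (‖x‖ + ‖x‖ * M)) ?_
  rintro ⟨v, u⟩ hvu
  dsimp only
  have hx : 0 ≤ ‖x‖ := norm_nonneg x
  have hr := abs_nonneg r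
  have hr' := le_abs_self r
  by_cases hv : M < ‖v‖
  · rw [wt_supp M v hv, zero_mul]
  · push Not at hv
    rw [hα.supp, zero_mul, mul_zero]
    have h3 := norm_pr_le i₀ v x
    have h4 : ‖x‖ * ‖v‖ ≤ ‖x‖ * M := by gcongr
    have h5 := norm_sub_norm_le u (pr i₀ v x)
    have h6 : 0 ≤ ‖x‖ * M := by positivity
    rw [Prod.norm_mk, lt_max_iff] at hvu
    rcases hvu with h | h <;> linarith

lemma integral_pair (hM : 0 ≤ M) (hα : Bmp r α) (hβ : Bmp r β) (x y : Fin (d + 1) → ℝ) :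
    ∫ p : (Fin d → ℝ) × (Fin d → ℝ),
      wt M p.1 * (α (p.2 - pr i₀ p.1 x) * β (p.2 - pr i₀ p.1 y)) =
    ∫ v, wt M v * corr α β (pr i₀ v (x - y)) := by
  rw [Measure.volume_eq_prod, integral_prod _ (integrable_line hM hα x (bmp_line_cont hβ y))]
  congr 1
  ext v
  dsimp only
  rw [integral_const_mul, corr_shift, pr_sub]

/-- The energy of a sum of tubes is a double sum of correlations. A tube consists of the pairs of a
slope `p.1` and a point `p.2` of the hyperplane describing the lines close to a given point. -/
lemma energy_eq (hM : 0 ≤ M) (hα : Bmp r α) (T : Finset (Fin (d + 1) → ℝ))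
    (b : (Fin (d + 1) → ℝ) → ℝ) :
    ∫ p : (Fin d → ℝ) × (Fin d → ℝ),
      wt M p.1 * (∑ y ∈ T, b y * α (p.2 - pr i₀ p.1 y)) ^ 2 =
    ∑ x ∈ T, ∑ y ∈ T, b x * b y * ∫ v, wt M v * corr α α (pr i₀ v (x - y)) := by
  have h1 : ∀ p : (Fin d → ℝ) × (Fin d → ℝ),
      wt M p.1 * (∑ y ∈ T, b y * α (p.2 - pr i₀ p.1 y)) ^ 2 = ∑ x ∈ T, ∑ y ∈ T, b x * b y *
        (wt M p.1 * (α (p.2 - pr i₀ p.1 x) * α (p.2 - pr i₀ p.1 y))) := by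
    intro p
    rw [sq, Finset.sum_mul_sum, Finset.mul_sum]
    refine Finset.sum_congr rfl fun x _ => ?_
    rw [Finset.mul_sum]
    exact Finset.sum_congr rfl fun y _ => by ring
  simp only [h1]
  rw [integral_finsetSum]
  · refine Finset.sum_congr rfl fun x _ => ?_
    rw [integral_finsetSum]
    · refine Finset.sum_congr rfl fun y _ => ?_
      rw [integral_const_mul, integral_pair hM hα hα]
    · intro y _
      exact (integrable_line hM hα x (bmp_line_cont hα y)).const_mul _
  · intro x _
    refine integrable_finsetSum _ fun y _ => ?_
    exact (integrable_line hM hα x (bmp_line_cont hα y)).const_mul _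

end

lemma half_pow_inv (d j : ℕ) : (((1 / 2 : ℝ) ^ j) ^ d)⁻¹ = (2 ^ d) ^ j := by
  rw [← pow_mul, ← pow_mul, mul_comm j d, ← inv_pow]; norm_num

lemma int_abs_phi {d : ℕ} {r : ℝ} (hr : 0 < r) : ∫ u : Fin d → ℝ, |phi r u| = 1 := by
  rw [← phi_int (d := d) hr]
  congr 1; ext u; exact abs_of_nonneg (phi_nonneg hr u)

lemma corr_phi_le {d : ℕ} (j : ℕ) (z : Fin d → ℝ) :
    |corr (phi ((1 / 2) ^ j)) (phi ((1 / 2) ^ j)) z| ≤ (tentInt d)⁻¹ * (2 ^ d) ^ j := by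
  have hr : (0 : ℝ) < (1 / 2) ^ j := by positivity
  refine (corr_abs_le (phi_bmp hr) (phi_bmp hr) (B := (tentInt d)⁻¹ * (2 ^ d) ^ j)
    (fun u => ?_) z).trans ?_
  · rw [abs_of_nonneg (phi_nonneg hr u), ← half_pow_inv, mul_comm, ← mul_inv]
    exact phi_le hr u
  · rw [int_abs_phi hr, mul_one]

lemma corr_psi_le {d : ℕ} (j : ℕ) (z : Fin d → ℝ) :
    |corr (psi ((1 / 2) ^ j)) (psi ((1 / 2) ^ j)) z| ≤
      (2 ^ d + 1) ^ 2 * (tentInt d)⁻¹ * (2 ^ d) ^ j := by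
  have hr : (0 : ℝ) < (1 / 2) ^ j := by positivity
  have ht := tentInt_pos d
  refine (corr_abs_le (psi_bmp hr) (psi_bmp hr)
    (B := (2 ^ d + 1) * ((tentInt d)⁻¹ * (2 ^ d) ^ j)) (fun u => ?_) z).trans ?_
  · refine (psi_abs_le hr u).trans ?_
    rw [← half_pow_inv, mul_comm (tentInt d)⁻¹, ← mul_inv]
    gcongr
    exact phi_le hr u
  · have h1 : ∫ u : Fin d → ℝ, |psi ((1 / 2) ^ j) u| ≤ 2 ^ d + 1 := by
      calc ∫ u : Fin d → ℝ, |psi ((1 / 2) ^ j) u|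
          ≤ ∫ u : Fin d → ℝ, (2 ^ d + 1) * phi ((1 / 2) ^ j) u :=
            integral_mono (psi_bmp hr).integrable.abs
              ((phi_bmp hr).integrable.const_mul _) (psi_abs_le hr)
        _ = _ := by rw [integral_const_mul, phi_int hr, mul_one]
    calc (2 ^ d + 1) * ((tentInt d)⁻¹ * (2 ^ d) ^ j) * ∫ u : Fin d → ℝ, |psi ((1 / 2) ^ j) u|
        ≤ (2 ^ d + 1) * ((tentInt d)⁻¹ * (2 ^ d) ^ j) * (2 ^ d + 1) := by gcongr
      _ = _ := by ring

/-- The constant in the kernel estimates. -/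
noncomputable def kC (d : ℕ) (M : ℝ) : ℝ :=
  M * (16 * M) ^ (d + 1) * ((2 ^ d + 1) ^ 2 * (tentInt d)⁻¹)

lemma kC_pos {d : ℕ} {M : ℝ} (hM : 1 ≤ M) : 0 < kC d M := by
  have := tentInt_pos d
  have : 0 < M := by linarith
  unfold kC; positivity

lemma kernel_phi {d : ℕ} {i₀ : Fin (d + 1)} {M : ℝ} (hM : 1 ≤ M) (j l : ℕ) (hlj : l ≤ j)
    (x y : Fin (d + 1) → ℝ) (hl : l = j ∨ (1 / 2) ^ (l + 1) < dist x y) :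
    |∫ v, wt M v * corr (phi ((1 / 2) ^ j)) (phi ((1 / 2) ^ j)) (pr i₀ v (x - y))| ≤
      kC d M * (2 ^ d) ^ j * ((1 / 2) ^ d) ^ (j - l) := by
  have hr : (0 : ℝ) < (1 / 2) ^ j := by positivity
  have ht := tentInt_pos d
  have hM0 : 0 < M := by linarith
  have hsupp := corr_supp (phi_bmp (d := d) hr) (phi_bmp hr)
  refine (kernel_scale (B := (tentInt d)⁻¹ * (2 ^ d) ^ j) d (Nat.le_succ d) j l hlj hM
    (by positivity) (kernel_near hM (corr_phi_le j) (tl i₀ (x - y)) ((x - y) i₀))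
    (fun ρ h1 h2 => kernel_far hr hM (corr_phi_le j) hsupp h1 h2) ?_).trans ?_
  · rcases hl with h | h
    · exact Or.inl h
    · right
      rw [dist_eq_norm] at h
      exact h.trans_le (norm_le_tl i₀ _)
  · have h2 : (1 : ℝ) ≤ (2 ^ d + 1) ^ 2 := one_le_pow₀ (by linarith [show (0:ℝ) < 2 ^ d by positivity])
    unfold kC
    calc M * (16 * M) ^ (d + 1) * ((tentInt d)⁻¹ * (2 ^ d) ^ j) * ((1 / 2) ^ d) ^ (j - l)
        = M * (16 * M) ^ (d + 1) * (1 * ((tentInt d)⁻¹)) * (2 ^ d) ^ j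
          * ((1 / 2) ^ d) ^ (j - l) := by ring
      _ ≤ _ := by gcongr

lemma kernel_psi {d : ℕ} {i₀ : Fin (d + 1)} {M : ℝ} (hM : 1 ≤ M) (j l : ℕ) (hlj : l ≤ j)
    (x y : Fin (d + 1) → ℝ) (hl : l = j ∨ (1 / 2) ^ (l + 1) < dist x y) :
    |∫ v, wt M v * corr (psi ((1 / 2) ^ j)) (psi ((1 / 2) ^ j)) (pr i₀ v (x - y))| ≤
      kC d M * (2 ^ d) ^ j * ((1 / 2) ^ (d + 1)) ^ (j - l) := by
  have hr : (0 : ℝ) < (1 / 2) ^ j := by positivity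
  have ht := tentInt_pos d
  have hM0 : 0 < M := by linarith
  have hsupp := corr_supp (psi_bmp (d := d) hr) (psi_bmp hr)
  have hintg : ∫ z : Fin d → ℝ, corr (psi ((1 / 2) ^ j)) (psi ((1 / 2) ^ j)) z = 0 := by
    rw [corr_int (psi_bmp hr) (psi_bmp hr), psi_int hr, zero_mul]
  refine (kernel_scale (B := (2 ^ d + 1) ^ 2 * (tentInt d)⁻¹ * (2 ^ d) ^ j)
    (a := tl i₀ (x - y)) (τ := (x - y) i₀) (d + 1) le_rfl
    j l hlj hM (by positivity)
    (kernel_near hM (corr_psi_le j) (tl i₀ (x - y)) ((x - y) i₀))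
    (fun ρ h1 h2 => ?_) ?_).trans ?_
  · refine (kernel_far_cancel hr hM (corr_cont (psi_bmp hr) (psi_bmp hr)) (corr_psi_le j) hsupp
      hintg h1 h2).trans ?_
    have hρ : 0 < ρ := by linarith
    rw [mul_assoc M]
    exact le_mul_of_one_le_left (by positivity) hM
  · rcases hl with h | h
    · exact Or.inl h
    · right
      rw [dist_eq_norm] at h
      exact h.trans_le (norm_le_tl i₀ _)
  · unfold kC
    apply le_of_eq
    ring

/-! ### Bounds for the level sets -/

section
variable {d : ℕ}

/-- The weighted sum of the functions `psi` at scale `r` over the projections of the points of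
`T` to the hyperplane; it measures the change of the projected weights between the scales `r` and
`r / 2`. -/
noncomputable def Dsum (i₀ : Fin (d + 1)) (r : ℝ) (T : Finset (Fin (d + 1) → ℝ))
    (b : (Fin (d + 1) → ℝ) → ℝ) (p : (Fin d → ℝ) × (Fin d → ℝ)) : ℝ :=
  ∑ y ∈ T, b y * psi r (p.2 - pr i₀ p.1 y)

/-- The weighted integral of `|Dsum|` over the tube of radius `r` dual to the point `x`, that is over
the lines, given by slope and intersection with the hyperplane, which pass close to `x`. -/
noncomputable def Fav (i₀ : Fin (d + 1)) (M r : ℝ) (T : Finset (Fin (d + 1) → ℝ))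
    (b : (Fin (d + 1) → ℝ) → ℝ) (x : Fin (d + 1) → ℝ) : ℝ :=
  ∫ p : (Fin d → ℝ) × (Fin d → ℝ),
    wt M p.1 * (phi r (p.2 - pr i₀ p.1 x) * |Dsum i₀ r T b p|)

lemma Dsum_cont (i₀ : Fin (d + 1)) {r : ℝ} (hr : 0 < r) (T : Finset (Fin (d + 1) → ℝ))
    (b : (Fin (d + 1) → ℝ) → ℝ) : Continuous (Dsum i₀ r T b) := by
  unfold Dsum
  exact continuous_finsetSum _ fun y _ =>
    continuous_const.mul (bmp_line_cont (psi_bmp hr) y)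

/-- The constant in the bound of the content of the level sets. -/
noncomputable def lC (d : ℕ) (M θs θt : ℝ) : ℝ :=
  (9 ^ (d + 1) * kC d M / (1 - (1 / 2) ^ d / θt) +
    9 ^ (d + 1) * kC d M / (1 - (1 / 2) ^ (d + 1) / θs)) / 2

/-- The bilinear form of the weights `a` and `b` is bounded by their energies. The term for `b` has
the better kernel because `psi` has integral zero. -/
lemma sum_Fav_le {i₀ : Fin (d + 1)} {M σ τ : ℝ} (hM : 1 ≤ M) (hσ : 0 < σ) (hτ : 0 < τ)
    (hσd : (1 / 2) ^ (d + 1) < σ ^ 2) (hτd : (1 / 2) ^ d < τ ^ 2) (j : ℕ)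
    {T T' : Finset (Fin (d + 1) → ℝ)} {a b : (Fin (d + 1) → ℝ) → ℝ}
    (hT : ∀ x ∈ T, ∀ y ∈ T, dist x y ≤ 1) (hb : ∀ y, 0 ≤ b y)
    (hball : ∀ l ≤ j, ∀ x,
      ∑ y ∈ T with dist y x ≤ (1 / 2) ^ l, b y ≤ 3 ^ (d + 1) * (σ ^ 2) ^ l)
    (htot : ∑ y ∈ T, b y ≤ 3 ^ (d + 1))
    (hT' : ∀ x ∈ T', ∀ y ∈ T', dist x y ≤ 1) (ha : ∀ y, 0 ≤ a y)
    (hball' : ∀ l ≤ j, ∀ x,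
      ∑ y ∈ T' with dist y x ≤ (1 / 2) ^ l, a y ≤ 3 ^ (d + 1) * (τ ^ 2) ^ l)
    (htot' : ∑ y ∈ T', a y ≤ 3 ^ (d + 1)) :
    ∑ x ∈ T', a x * Fav i₀ M ((1 / 2) ^ j) T b x ≤
      lC d M (σ ^ 2) (τ ^ 2) * (2 ^ d * (σ * τ)) ^ j := by
  have hr : (0 : ℝ) < (1 / 2) ^ j := by positivity
  have hM0 : 0 ≤ M := by linarith
  set D := Dsum i₀ ((1 / 2) ^ j) T b with hD
  set N : (Fin d → ℝ) × (Fin d → ℝ) → ℝ :=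
    fun p => ∑ x ∈ T', a x * phi ((1 / 2) ^ j) (p.2 - pr i₀ p.1 x) with hN
  have hDc : Continuous D := Dsum_cont i₀ hr T b
  have hNc : Continuous N := continuous_finsetSum _ fun y _ =>
    continuous_const.mul (bmp_line_cont (phi_bmp hr) y)
  have hintN : ∀ h : (Fin d → ℝ) × (Fin d → ℝ) → ℝ, Continuous h →
      Integrable fun p => wt M p.1 * (N p * h p) := by
    intro h hh
    have : (fun p => wt M p.1 * (N p * h p)) = fun p => ∑ x ∈ T', a x *
        (wt M p.1 * (phi ((1 / 2) ^ j) (p.2 - pr i₀ p.1 x) * h p)) := by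
      ext p
      rw [hN, Finset.sum_mul, Finset.mul_sum]
      exact Finset.sum_congr rfl fun x _ => by ring
    rw [this]
    exact integrable_finsetSum _ fun x _ =>
      (integrable_line hM0 (phi_bmp hr) x hh).const_mul _
  have hintD : ∀ h : (Fin d → ℝ) × (Fin d → ℝ) → ℝ, Continuous h →
      Integrable fun p => wt M p.1 * (D p * h p) := by
    intro h hh
    have : (fun p => wt M p.1 * (D p * h p)) = fun p => ∑ x ∈ T, b x *
        (wt M p.1 * (psi ((1 / 2) ^ j) (p.2 - pr i₀ p.1 x) * h p)) := by
      ext p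
      rw [hD, Dsum, Finset.sum_mul, Finset.mul_sum]
      exact Finset.sum_congr rfl fun x _ => by ring
    rw [this]
    exact integrable_finsetSum _ fun x _ =>
      (integrable_line hM0 (psi_bmp hr) x hh).const_mul _
  have hN2 : ∫ p, wt M p.1 * N p ^ 2 ≤
      9 ^ (d + 1) * (kC d M * (2 ^ d) ^ j) / (1 - (1 / 2) ^ d / τ ^ 2) * (τ ^ 2) ^ j := by
    rw [energy_eq hM0 (phi_bmp hr)]
    refine energy_sum (by positivity) hτd ?_ j T' hT' a ha hball' htot' _
      fun x y l hlj hl => kernel_phi hM j l hlj x y hl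
    have := kC_pos (d := d) hM
    positivity
  have hD2 : ∫ p, wt M p.1 * D p ^ 2 ≤
      9 ^ (d + 1) * (kC d M * (2 ^ d) ^ j) / (1 - (1 / 2) ^ (d + 1) / σ ^ 2) * (σ ^ 2) ^ j := by
    simp only [hD, Dsum]
    rw [energy_eq hM0 (psi_bmp hr)]
    refine energy_sum (by positivity) hσd ?_ j T hT b hb hball htot _
      fun x y l hlj hl => kernel_psi hM j l hlj x y hl
    have := kC_pos (d := d) hM
    positivity
  -- the parameter which balances the two energies
  set lam : ℝ := (σ / τ) ^ j with hlam
  have hlam0 : 0 < lam := by positivity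
  have h1 : ∑ x ∈ T', a x * Fav i₀ M ((1 / 2) ^ j) T b x = ∫ p, wt M p.1 * (N p * |D p|) := by
    have : (fun p => wt M p.1 * (N p * |D p|)) = fun p => ∑ x ∈ T', a x *
        (wt M p.1 * (phi ((1 / 2) ^ j) (p.2 - pr i₀ p.1 x) * |D p|)) := by
      ext p
      rw [hN, Finset.sum_mul, Finset.mul_sum]
      exact Finset.sum_congr rfl fun x _ => by ring
    rw [this, integral_finsetSum]
    · refine Finset.sum_congr rfl fun x _ => ?_
      rw [integral_const_mul]; rfl
    · exact fun x _ => (integrable_line hM0 (phi_bmp hr) x hDc.abs).const_mul _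
  have h2 : ∫ p, wt M p.1 * (N p * |D p|) ≤
      (lam * (∫ p, wt M p.1 * N p ^ 2) + lam⁻¹ * ∫ p, wt M p.1 * D p ^ 2) / 2 := by
    have hi1 : Integrable fun p => wt M p.1 * N p ^ 2 := by
      simpa only [sq] using hintN N hNc
    have hi2 : Integrable fun p => wt M p.1 * D p ^ 2 := by
      simpa only [sq] using hintD D hDc
    rw [← integral_const_mul, ← integral_const_mul,
      ← integral_add (hi1.const_mul _) (hi2.const_mul _), ← integral_div]
    refine integral_mono (hintN _ hDc.abs)
      (((hi1.const_mul _).add (hi2.const_mul _)).div_const _) fun p => ?_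
    dsimp only [Pi.add_apply]
    have h3 : 0 ≤ wt M p.1 := wt_nonneg _ _
    have h4 : N p * |D p| ≤ (lam * N p ^ 2 + lam⁻¹ * D p ^ 2) / 2 := by
      have h5 : 0 ≤ lam⁻¹ * (lam * N p - |D p|) ^ 2 := by positivity
      have h6 : lam⁻¹ * (lam * N p - |D p|) ^ 2 =
          lam * N p ^ 2 - 2 * (N p * |D p|) + lam⁻¹ * D p ^ 2 := by
        rw [← sq_abs (D p)]
        field_simp
        ring
      linarith
    calc wt M p.1 * (N p * |D p|)
        ≤ wt M p.1 * ((lam * N p ^ 2 + lam⁻¹ * D p ^ 2) / 2) := by gcongr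
      _ = _ := by ring
  rw [h1]
  refine h2.trans ?_
  have h7 : lam * (τ ^ 2) ^ j = (σ * τ) ^ j := by
    rw [hlam, ← mul_pow]; congr 1; field_simp
  have h8 : lam⁻¹ * (σ ^ 2) ^ j = (σ * τ) ^ j := by
    rw [hlam, ← inv_pow, ← mul_pow]; congr 1; field_simp
  calc (lam * (∫ p, wt M p.1 * N p ^ 2) + lam⁻¹ * ∫ p, wt M p.1 * D p ^ 2) / 2
      ≤ (lam * (9 ^ (d + 1) * (kC d M * (2 ^ d) ^ j) / (1 - (1 / 2) ^ d / τ ^ 2) * (τ ^ 2) ^ j) +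
        lam⁻¹ * (9 ^ (d + 1) * (kC d M * (2 ^ d) ^ j) / (1 - (1 / 2) ^ (d + 1) / σ ^ 2) *
          (σ ^ 2) ^ j)) / 2 := by gcongr
    _ = (9 ^ (d + 1) * (kC d M * (2 ^ d) ^ j) / (1 - (1 / 2) ^ d / τ ^ 2) * (lam * (τ ^ 2) ^ j) +
        9 ^ (d + 1) * (kC d M * (2 ^ d) ^ j) / (1 - (1 / 2) ^ (d + 1) / σ ^ 2) *
          (lam⁻¹ * (σ ^ 2) ^ j)) / 2 := by ring
    _ = _ := by
      rw [h7, h8, mul_pow, lC]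
      ring

/-- The content of a set on which `Fav` is large, by testing against Frostman weights on the set. -/
lemma content_level_le {i₀ : Fin (d + 1)} {M σ τ : ℝ} (hM : 1 ≤ M) (hσ : 0 < σ) (hτ : 0 < τ)
    (hσd : (1 / 2) ^ (d + 1) < σ ^ 2) (hτd : (1 / 2) ^ d < τ ^ 2) (j : ℕ)
    {T : Finset (Fin (d + 1) → ℝ)} {b : (Fin (d + 1) → ℝ) → ℝ}
    (hT : ∀ x ∈ T, ∀ y ∈ T, dist x y ≤ 1) (hb : ∀ y, 0 ≤ b y)
    (hball : ∀ l ≤ j, ∀ x,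
      ∑ y ∈ T with dist y x ≤ (1 / 2) ^ l, b y ≤ 3 ^ (d + 1) * (σ ^ 2) ^ l)
    (htot : ∑ y ∈ T, b y ≤ 3 ^ (d + 1)) {S : Set (Fin (d + 1) → ℝ)} {e₀ : Fin (d + 1) → ℝ}
    (hS : S ⊆ closedBall e₀ (1 / 2)) {c : ℝ} (hc : 0 < c)
    (hSc : ∀ x ∈ S, c ≤ Fav i₀ M ((1 / 2) ^ j) T b x) :
    content (τ ^ 2) S ≤
      ENNReal.ofReal (lC d M (σ ^ 2) (τ ^ 2) * (2 ^ d * (σ * τ)) ^ j / c) := by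
  obtain ⟨T', hT', a, ha, hball', hcont, htot'⟩ := frostman (θ := τ ^ 2) (by positivity) j
    (hS.trans (closedBall_subset_closedBall (by norm_num)))
  refine hcont.trans (ENNReal.ofReal_le_ofReal ?_)
  rw [le_div_iff₀ hc]
  refine le_trans ?_ (sum_Fav_le (i₀ := i₀) hM hσ hτ hσd hτd j hT hb hball htot
    (fun x hx y hy => ?_) ha hball' htot')
  · rw [Finset.sum_mul]
    exact Finset.sum_le_sum fun x hx => mul_le_mul_of_nonneg_left (hSc x (hT' x hx)) (ha x)
  · have h1 := hS (hT' x hx)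
    have h2 := hS (hT' y hy)
    rw [mem_closedBall] at h1 h2
    have := dist_triangle_right x y e₀
    linarith

end

/-! ### The smoothed slope distribution seen from a point -/

lemma corr_diff {d : ℕ} {r : ℝ} (hr : 0 < r) (z : Fin d → ℝ) :
    corr (phi (r / 2)) (phi (r / 2)) z - corr (phi r) (phi r) z =
      corr (fun u => phi (r / 2) u + phi r u) (psi r) z := by
  have hi : ∀ s t : ℝ, 0 < t → Integrable fun u : Fin d → ℝ => phi s (u - z) * phi t u := by
    intro s t ht
    have h1 := phi_cont (d := d) s
    have h2 := phi_cont (d := d) t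
    refine integrable_of_supp (R := t) (by fun_prop) fun u hu => ?_
    rw [phi_supp ht u hu, mul_zero]
  have hr2 : 0 < r / 2 := by positivity
  have hcomm := corr_comm (phi (r / 2)) (phi r) (phi_neg _) (phi_neg _) z
  have h : corr (fun u => phi (r / 2) u + phi r u) (psi r) z =
      corr (phi (r / 2)) (phi (r / 2)) z - corr (phi (r / 2)) (phi r) z +
        (corr (phi r) (phi (r / 2)) z - corr (phi r) (phi r) z) := by
    unfold corr psi
    rw [← integral_sub (hi _ _ hr2) (hi _ _ hr), ← integral_sub (hi _ _ hr2) (hi _ _ hr)]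
    refine Eq.trans ?_ (integral_add ((hi (r / 2) _ hr2).sub (hi (r / 2) _ hr))
      ((hi r _ hr2).sub (hi r _ hr)))
    congr 1
    ext u
    dsimp only
    ring
  rw [h, hcomm]
  ring

section
variable {d : ℕ}

/-- The density of slopes of the lines from `x` to the weighted points of `T`, smoothed at
scale `r`. -/
noncomputable def Hden (i₀ : Fin (d + 1)) (r : ℝ) (T : Finset (Fin (d + 1) → ℝ))
    (b : (Fin (d + 1) → ℝ) → ℝ) (x : Fin (d + 1) → ℝ) (v : Fin d → ℝ) : ℝ :=
  ∑ y ∈ T, b y * corr (phi r) (phi r) (pr i₀ v (x - y))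

/-- The slope of the line through `x` and `y`, as a graph over the coordinate `i₀`. -/
noncomputable def slope (i₀ : Fin (d + 1)) (x y : Fin (d + 1) → ℝ) : Fin d → ℝ :=
  ((x - y) i₀)⁻¹ • tl i₀ (x - y)

variable {i₀ : Fin (d + 1)} {r M : ℝ} {T : Finset (Fin (d + 1) → ℝ)}
  {b : (Fin (d + 1) → ℝ) → ℝ} {x : Fin (d + 1) → ℝ}

lemma Hden_cont (hr : 0 < r) : Continuous (Hden i₀ r T b x) := by
  unfold Hden
  exact continuous_finsetSum _ fun y _ =>
    continuous_const.mul ((corr_cont (phi_bmp hr) (phi_bmp hr)).comp (pr_cont i₀ _))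

lemma corr_phi_nonneg (hr : 0 < r) (z : Fin d → ℝ) : 0 ≤ corr (phi r) (phi r) z :=
  integral_nonneg fun _ => mul_nonneg (phi_nonneg hr _) (phi_nonneg hr _)

lemma Hden_nonneg (hr : 0 < r) (hb : ∀ y, 0 ≤ b y) (v : Fin d → ℝ) : 0 ≤ Hden i₀ r T b x v :=
  Finset.sum_nonneg fun y _ => mul_nonneg (hb y) (corr_phi_nonneg hr _)

lemma Hden_le (hb : ∀ y, 0 ≤ b y) (htot : ∑ y ∈ T, b y ≤ 3 ^ (d + 1)) (j : ℕ) (v : Fin d → ℝ) :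
    Hden i₀ ((1 / 2) ^ j) T b x v ≤ 3 ^ (d + 1) * ((tentInt d)⁻¹ * (2 ^ d) ^ j) := by
  have ht := tentInt_pos d
  unfold Hden
  calc ∑ y ∈ T, b y * corr (phi ((1 / 2) ^ j)) (phi ((1 / 2) ^ j)) (pr i₀ v (x - y))
      ≤ ∑ y ∈ T, b y * ((tentInt d)⁻¹ * (2 ^ d) ^ j) :=
        Finset.sum_le_sum fun y _ =>
          mul_le_mul_of_nonneg_left ((le_abs_self _).trans (corr_phi_le j _)) (hb y)
    _ ≤ _ := by rw [← Finset.sum_mul]; gcongr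

lemma Hden_supp (hr : 0 < r) {c : ℝ} (hc : 0 < c) (hxc : ∀ y ∈ T, c ≤ |(x - y) i₀|)
    {v : Fin d → ℝ} (hv : Hden i₀ r T b x v ≠ 0) :
    ∃ y ∈ T, dist v (slope i₀ x y) ≤ 2 * r / c := by
  obtain ⟨y, hy, hne⟩ := Finset.exists_ne_zero_of_sum_ne_zero hv
  refine ⟨y, hy, ?_⟩
  by_contra! h
  have hτ : 0 < |(x - y) i₀| := hc.trans_le (hxc y hy)
  refine hne ?_
  have : corr (phi r) (phi r) (pr i₀ v (x - y)) = 0 := by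
    refine corr_supp (phi_bmp hr) (phi_bmp hr) _ ?_
    refine not_mem_ball (abs_pos.1 hτ) ?_
    rw [mem_closedBall, not_le]
    refine lt_of_le_of_lt ?_ h
    have := hxc y hy
    gcongr
  rw [this, mul_zero]

lemma Hden_integral (hr : 0 < r) (hb : ∀ y, 0 ≤ b y) {c R : ℝ} (hc : 0 < c)
    (hxc : ∀ y ∈ T, c ≤ |(x - y) i₀|) (hxR : ∀ y ∈ T, ‖x - y‖ ≤ R) :
    (R ^ d)⁻¹ * ∑ y ∈ T, b y ≤ ∫ v, Hden i₀ r T b x v := by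
  unfold Hden
  rw [integral_finsetSum, Finset.mul_sum]
  · refine Finset.sum_le_sum fun y hy => ?_
    rw [integral_const_mul, mul_comm]
    refine mul_le_mul_of_nonneg_left ?_ (hb y)
    unfold pr
    rw [integral_line, corr_int (phi_bmp hr) (phi_bmp hr), phi_int hr, mul_one, mul_one, abs_inv,
      abs_pow]
    have h1 : 0 < |(x - y) i₀| := hc.trans_le (hxc y hy)
    have h2 : |(x - y) i₀| ≤ R := (norm_le_pi_norm (x - y) i₀).trans (hxR y hy)
    gcongr
  · intro y hy
    have h1 : 0 < |(x - y) i₀| := hc.trans_le (hxc y hy)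
    refine Integrable.const_mul ?_ _
    refine integrable_of_supp ((corr_cont (phi_bmp hr) (phi_bmp hr)).comp (pr_cont i₀ _))
      (R := ‖((x - y) i₀)⁻¹ • tl i₀ (x - y)‖ + 2 * r / |(x - y) i₀|) fun v hv => ?_
    refine corr_supp (phi_bmp hr) (phi_bmp hr) _ (not_mem_ball (abs_pos.1 h1) ?_)
    rw [mem_closedBall, not_le, dist_eq_norm]
    have := norm_sub_norm_le v (((x - y) i₀)⁻¹ • tl i₀ (x - y))
    linarith

/-- The change of the slope density between two consecutive scales is controlled by `Fav`: by
`corr_diff` it is a correlation with `psi`, and `phi` at scale `r / 2` is dominated by `phi` at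
scale `r`. -/
lemma Hden_step (hr : 0 < r) (hM : 0 ≤ M) :
    ∫ v, wt M v * |Hden i₀ (r / 2) T b x v - Hden i₀ r T b x v| ≤
      (2 ^ d + 1) * Fav i₀ M r T b x := by
  have hr2 : 0 < r / 2 := by positivity
  have hDc := Dsum_cont i₀ hr T b
  have hintg := integrable_line (i₀ := i₀) hM (phi_bmp hr) x hDc.abs
  have hpt : ∀ v, |Hden i₀ (r / 2) T b x v - Hden i₀ r T b x v| ≤
      (2 ^ d + 1) * ∫ u, phi r (u - pr i₀ v x) * |Dsum i₀ r T b (v, u)| := by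
    intro v
    have hDv : Continuous fun u => Dsum i₀ r T b (v, u) :=
      hDc.comp (Continuous.prodMk_right v)
    have hsupp : ∀ (s : ℝ), 0 < s → s ≤ r → ∀ u, ‖pr i₀ v x‖ + r < ‖u‖ →
        phi s (u - pr i₀ v x) = 0 := by
      intro s hs hsr u hu
      refine phi_supp hs _ ?_
      have := norm_sub_norm_le u (pr i₀ v x)
      linarith
    have hφ := phi_cont (d := d) r
    have hφ' := phi_cont (d := d) (r / 2)
    have h1 : Hden i₀ (r / 2) T b x v - Hden i₀ r T b x v =
        ∫ u, (phi (r / 2) (u - pr i₀ v x) + phi r (u - pr i₀ v x)) * Dsum i₀ r T b (v, u) := by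
      unfold Hden Dsum
      rw [← Finset.sum_sub_distrib]
      simp only [← mul_sub, corr_diff hr]
      simp only [pr_sub, ← corr_shift, Finset.mul_sum]
      rw [integral_finsetSum]
      · refine Finset.sum_congr rfl fun y _ => ?_
        rw [← integral_const_mul]
        congr 1
        ext u
        ring
      · intro y _
        have hψ := (psi_bmp (d := d) hr).cont
        refine integrable_of_supp (R := ‖pr i₀ v x‖ + r) (by fun_prop) fun u hu => ?_
        rw [hsupp _ hr2 (by linarith) u hu, hsupp _ hr le_rfl u hu, add_zero, zero_mul]
    rw [h1, ← integral_const_mul]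
    refine abs_integral_le_integral_abs.trans ?_
    refine integral_mono (integrable_of_supp (R := ‖pr i₀ v x‖ + r) (by fun_prop) fun u hu => ?_)
      (integrable_of_supp (R := ‖pr i₀ v x‖ + r) (by fun_prop) fun u hu => ?_) fun u => ?_
    · rw [hsupp _ hr2 (by linarith) u hu, hsupp _ hr le_rfl u hu, add_zero, zero_mul, abs_zero]
    · rw [hsupp _ hr le_rfl u hu, zero_mul, mul_zero]
    · dsimp only
      have h2 := phi_half hr (u - pr i₀ v x)
      have h3 := phi_nonneg hr2 (u - pr i₀ v x)
      have h4 := phi_nonneg hr (u - pr i₀ v x)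
      rw [abs_mul, abs_of_nonneg (by positivity), ← mul_assoc]
      gcongr
      linarith
  have hF : Fav i₀ M r T b x =
      ∫ v, wt M v * ∫ u, phi r (u - pr i₀ v x) * |Dsum i₀ r T b (v, u)| := by
    unfold Fav
    rw [Measure.volume_eq_prod, integral_prod _ hintg]
    congr 1
    ext v
    dsimp only
    rw [integral_const_mul]
  have hHc := (Hden_cont (i₀ := i₀) (T := T) (b := b) (x := x) hr)
  have hHc' := (Hden_cont (i₀ := i₀) (T := T) (b := b) (x := x) hr2)
  have hw := wt_cont (d := d) M
  rw [hF, ← integral_const_mul]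
  refine integral_mono (integrable_of_supp (R := M) (by fun_prop) fun v hv => ?_) ?_ fun v => ?_
  · rw [wt_supp M v hv, zero_mul]
  · refine Integrable.const_mul ?_ _
    have h5 := hintg.integral_prod_left
    simpa only [integral_const_mul] using h5
  · dsimp only
    calc wt M v * |Hden i₀ (r / 2) T b x v - Hden i₀ r T b x v|
        ≤ wt M v * ((2 ^ d + 1) * ∫ u, phi r (u - pr i₀ v x) * |Dsum i₀ r T b (v, u)|) :=
          mul_le_mul_of_nonneg_left (hpt v) (wt_nonneg _ _)
      _ = _ := by ring

lemma Hden_wt_int (j k : ℕ) :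
    Integrable fun v => wt M v * |Hden i₀ ((1 / 2) ^ j) T b x v - Hden i₀ ((1 / 2) ^ k) T b x v| := by
  have h1 := (Hden_cont (i₀ := i₀) (T := T) (b := b) (x := x) (r := (1 / 2) ^ j) (by positivity))
  have h2 := (Hden_cont (i₀ := i₀) (T := T) (b := b) (x := x) (r := (1 / 2) ^ k) (by positivity))
  have hw := wt_cont (d := d) M
  refine integrable_of_supp (R := M) (by fun_prop) fun v hv => ?_
  rw [wt_supp M v hv, zero_mul]

lemma Hden_telescope (hM : 0 ≤ M) (k i : ℕ) :
    ∫ v, wt M v * |Hden i₀ ((1 / 2) ^ (k + i)) T b x v - Hden i₀ ((1 / 2) ^ k) T b x v| ≤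
      (2 ^ d + 1) * ∑ j ∈ Finset.range i, Fav i₀ M ((1 / 2) ^ (k + j)) T b x := by
  induction i with
  | zero => simp
  | succ i ih =>
    have hstep := Hden_step (i₀ := i₀) (T := T) (b := b) (x := x) (M := M)
      (r := (1 / 2) ^ (k + i)) (by positivity) hM
    rw [show (1 / 2 : ℝ) ^ (k + i) / 2 = (1 / 2) ^ (k + (i + 1)) by
      rw [← add_assoc, pow_succ _ (k + i)]; ring] at hstep
    rw [Finset.sum_range_succ, mul_add]
    refine le_trans ?_ (add_le_add ih hstep)
    rw [← integral_add (Hden_wt_int _ _) (Hden_wt_int _ _)]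
    refine integral_mono (Hden_wt_int _ _)
      ((Hden_wt_int _ _).add (Hden_wt_int _ _)) fun v => ?_
    dsimp only [Pi.add_apply]
    rw [← mul_add]
    refine mul_le_mul_of_nonneg_left ?_ (wt_nonneg _ _)
    rw [add_comm |Hden i₀ ((1 / 2) ^ (k + i)) T b x v - _|]
    exact abs_sub_le _ _ _

/-- If the slopes from `x` to `T` are contained in a set `N` of small measure, then the slope
density has to change between a coarse and a fine scale. -/
lemma Hden_change (hb : ∀ y, 0 ≤ b y) (htot : ∑ y ∈ T, b y ≤ 3 ^ (d + 1)) {c R : ℝ} (hc : 0 < c)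
    (hR : 0 ≤ R) (hxc : ∀ y ∈ T, c ≤ |(x - y) i₀|) (hxR : ∀ y ∈ T, ‖x - y‖ ≤ R) (hM : R / c + 2 ≤ M)
    (k i : ℕ) (hk : 2 * (1 / 2) ^ k / c ≤ 1) {N : Set (Fin d → ℝ)} (hNm : MeasurableSet N)
    (hN : ∀ y ∈ T, closedBall (slope i₀ x y) (2 * (1 / 2) ^ (k + i) / c) ⊆ N)
    {g : ℝ} (hg : volume N ≤ ENNReal.ofReal g) (hg0 : 0 ≤ g) :
    (R ^ d)⁻¹ * (∑ y ∈ T, b y) - M * (3 ^ (d + 1) * ((tentInt d)⁻¹ * (2 ^ d) ^ k)) * g ≤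
      ∫ v, wt M v * |Hden i₀ ((1 / 2) ^ (k + i)) T b x v - Hden i₀ ((1 / 2) ^ k) T b x v| := by
  have hrk : (0 : ℝ) < (1 / 2) ^ k := by positivity
  have hrm : (0 : ℝ) < (1 / 2) ^ (k + i) := by positivity
  set H := Hden i₀ ((1 / 2) ^ k) T b x with hH
  -- `C` bounds `H` pointwise
  set C : ℝ := 3 ^ (d + 1) * ((tentInt d)⁻¹ * (2 ^ d) ^ k) with hC
  have hC0 : 0 ≤ C := by have := tentInt_pos d; positivity
  have hHc : Continuous H := Hden_cont hrk
  have hw := wt_cont (d := d) M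
  have hM0 : 2 ≤ M := by
    have : 0 ≤ R / c := by positivity
    linarith
  -- `M` is so large that the cutoff does not affect the support of the slope density
  have hone : ∀ v, H v ≠ 0 → 1 ≤ wt M v := by
    intro v hv
    obtain ⟨y, hy, hd⟩ := Hden_supp hrk hc hxc hv
    have h1 : ‖slope i₀ x y‖ ≤ R / c := by
      unfold slope
      rw [norm_smul, norm_inv, Real.norm_eq_abs, inv_mul_eq_div]
      have h2 := hxc y hy
      have h3 := (norm_tl_le i₀ (x - y)).trans (hxR y hy)
      gcongr
    have h4 : ‖v‖ ≤ ‖slope i₀ x y‖ + 1 := by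
      have := norm_sub_norm_le v (slope i₀ x y)
      rw [dist_eq_norm] at hd
      linarith
    exact le_max_of_le_left (by linarith)
  have hwH : Integrable fun v => wt M v * H v :=
    integrable_of_supp (R := M) (by fun_prop) fun v hv => by rw [wt_supp M v hv, zero_mul]
  have hHint : Integrable H := by
    refine integrable_of_supp (R := M) hHc fun v hv => ?_
    by_contra h
    have := hone v h
    rw [wt_supp M v hv] at this
    linarith
  have hlow : (R ^ d)⁻¹ * ∑ y ∈ T, b y ≤ ∫ v, wt M v * H v := by
    refine (Hden_integral hrk hb hc hxc hxR).trans ?_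
    refine integral_mono hHint hwH fun v => ?_
    dsimp only
    by_cases h : H v = 0
    · rw [← hH, h, mul_zero]
    · exact le_mul_of_one_le_left (Hden_nonneg hrk hb v) (hone v h)
  have hind : ∫ v, N.indicator (fun _ => M * C) v ≤ M * C * g := by
    rw [integral_indicator_const _ hNm, smul_eq_mul, mul_comm]
    gcongr
    exact ENNReal.toReal_le_of_le_ofReal hg0 hg
  have hNint : Integrable (N.indicator fun _ : Fin d → ℝ => M * C) :=
    (integrable_indicator_iff hNm).2 (integrableOn_const (hg.trans_lt ENNReal.ofReal_lt_top).ne)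
  have hfin : ∫ v, wt M v * H v ≤ ∫ v, (wt M v * |Hden i₀ ((1 / 2) ^ (k + i)) T b x v - H v| +
      N.indicator (fun _ => M * C) v) := by
    refine integral_mono hwH ((Hden_wt_int _ _).add hNint) fun v => ?_
    dsimp only [Pi.add_apply]
    by_cases hv : v ∈ N
    · rw [Set.indicator_of_mem hv]
      have h1 : wt M v * H v ≤ M * C :=
        mul_le_mul (wt_le (by linarith) v) (Hden_le hb htot k v) (Hden_nonneg hrk hb v)
          (by linarith)
      have h2 : 0 ≤ wt M v * |Hden i₀ ((1 / 2) ^ (k + i)) T b x v - H v| :=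
        mul_nonneg (wt_nonneg _ _) (abs_nonneg _)
      linarith
    · rw [Set.indicator_of_notMem hv, add_zero]
      have h1 : Hden i₀ ((1 / 2) ^ (k + i)) T b x v = 0 := by
        by_contra h
        obtain ⟨y, hy, hd⟩ := Hden_supp hrm hc hxc h
        exact hv (hN y hy hd)
      rw [h1, zero_sub, abs_neg]
      exact mul_le_mul_of_nonneg_left (le_abs_self _) (wt_nonneg _ _)
  rw [integral_add (Hden_wt_int _ _) hNint] at hfin
  linarith

end

/-! ### Sets of points which see a compact set in a null set of directions -/

section
variable {d : ℕ} {i₀ : Fin (d + 1)}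

lemma lC_nonneg {M θs θt : ℝ} (hM : 1 ≤ M) (hs : (1 / 2) ^ (d + 1) < θs)
    (ht : (1 / 2) ^ d < θt) : 0 ≤ lC d M θs θt := by
  have hθs : 0 < θs := lt_trans (by positivity) hs
  have hθt : 0 < θt := lt_trans (by positivity) ht
  have h1 : 0 ≤ 1 - (1 / 2) ^ (d + 1) / θs := by
    rw [sub_nonneg, div_le_one hθs]; exact hs.le
  have h2 : 0 ≤ 1 - (1 / 2) ^ d / θt := by
    rw [sub_nonneg, div_le_one hθt]; exact ht.le
  have h3 := (kC_pos (d := d) hM).le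
  unfold lC
  positivity

/-- A neighbourhood of the set of slopes of the lines from `x` to `K`. -/
noncomputable def nbd (i₀ : Fin (d + 1)) (c : ℝ) (K : Set (Fin (d + 1) → ℝ)) (m : ℕ)
    (x : Fin (d + 1) → ℝ) : Set (Fin d → ℝ) :=
  cthickening (2 * (1 / 2) ^ m / c) (slope i₀ x '' K)

/-- The points whose slopes to `K` have a small neighbourhood at a fine scale form a set of small
content: for every such point `Fav` is large at some intermediate scale. The bound depends on the
coarse scale `k` only, not on the fine scale `k + i`. -/
lemma content_small_nbd {σ τ c R : ℝ} (hσ : 0 < σ) (hτ : 0 < τ)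
    (hσd : (1 / 2) ^ (d + 1) < σ ^ 2) (hτd : (1 / 2) ^ d < τ ^ 2) {κ : ℝ} (hκ0 : 0 < κ)
    (hκ : κ ^ 2 = 2 ^ d * (σ * τ)) (hκ1 : κ < 1)
    {K E : Set (Fin (d + 1) → ℝ)} {y₀ e₀ : Fin (d + 1) → ℝ} (hK : K ⊆ closedBall y₀ (1 / 2))
    (hE : E ⊆ closedBall e₀ (1 / 2)) (hc : 0 < c) (hR : 0 < R)
    (hEc : ∀ x ∈ E, ∀ y ∈ K, c ≤ |(x - y) i₀|) (hER : ∀ x ∈ E, ∀ y ∈ K, ‖x - y‖ ≤ R)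
    {c₁ : ℝ} (hc₁ : 0 < c₁) (hc₁K : c₁ = (R ^ d)⁻¹ * (content (σ ^ 2) K).toReal)
    {C₁ : ℝ} (hC₁ : C₁ = c₁ / (2 * (2 ^ d + 1)) * (1 - κ))
    (k i : ℕ) (hk : 2 * (1 / 2) ^ k / c ≤ 1) {g : ℝ} (hg0 : 0 ≤ g)
    (hg : (R / c + 2) * (3 ^ (d + 1) * ((tentInt d)⁻¹ * (2 ^ d) ^ k)) * g ≤ c₁ / 2) :
    content (τ ^ 2) {x ∈ E | volume (nbd i₀ c K (k + i) x) ≤ ENNReal.ofReal g} ≤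
      ENNReal.ofReal (lC d (R / c + 2) (σ ^ 2) (τ ^ 2) / C₁ / (1 - κ) * (κ ^ 2) ^ k) := by
  set M := R / c + 2 with hM
  have hM1 : 1 ≤ M := by have : 0 ≤ R / c := by positivity
                         linarith
  have h1κ : 0 < 1 - κ := by linarith
  have hC₁0 : 0 < C₁ := by rw [hC₁]; positivity
  obtain ⟨T, hTK, b, hb, hball, hcont, htot⟩ := frostman (θ := σ ^ 2) (by positivity) (k + i)
    (hK.trans (closedBall_subset_closedBall (by norm_num : (1 / 2 : ℝ) ≤ 1)))
  have hb0 : 0 ≤ ∑ y ∈ T, b y := Finset.sum_nonneg fun y _ => hb y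
  have hbK : (content (σ ^ 2) K).toReal ≤ ∑ y ∈ T, b y := ENNReal.toReal_le_of_le_ofReal hb0 hcont
  have hTd : ∀ x ∈ T, ∀ y ∈ T, dist x y ≤ 1 := by
    intro x hx y hy
    have h1 := hK (hTK x hx)
    have h2 := hK (hTK y hy)
    rw [mem_closedBall] at h1 h2
    have := dist_triangle_right x y y₀
    linarith
  set G := {x ∈ E | volume (nbd i₀ c K (k + i) x) ≤ ENNReal.ofReal g} with hG
  -- the content of the level sets decays like `(κ ^ 2) ^ j`, so thresholds proportional to `κ ^ j`
  -- are affordable, and they are summable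
  have hcover : G ⊆ ⋃ j : ℕ, {x ∈ G | j < i ∧ C₁ * κ ^ j ≤ Fav i₀ M ((1 / 2) ^ (k + j)) T b x} := by
    intro x hx
    by_contra hcon
    simp only [Set.mem_iUnion, Set.mem_ofPred_eq, not_exists, not_and, not_le] at hcon
    have h1 := Hden_change (i₀ := i₀) (x := x) (M := M) hb htot hc hR.le
      (fun y hy => hEc x hx.1 y (hTK y hy)) (fun y hy => hER x hx.1 y (hTK y hy)) le_rfl k i hk
      (N := nbd i₀ c K (k + i) x) isClosed_cthickening.measurableSet
      (fun y hy => closedBall_subset_cthickening (Set.mem_image_of_mem _ (hTK y hy)) _) hx.2 hg0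
    have h2 := Hden_telescope (i₀ := i₀) (T := T) (b := b) (x := x) (M := M) (by linarith) k i
    have h3 : c₁ ≤ (R ^ d)⁻¹ * ∑ y ∈ T, b y := by rw [hc₁K]; gcongr
    have h4 : c₁ / 2 ≤ (2 ^ d + 1) * ∑ j ∈ Finset.range i, Fav i₀ M ((1 / 2) ^ (k + j)) T b x := by
      linarith
    have hgeom : ∑ j ∈ Finset.range i, C₁ * κ ^ j ≤ C₁ / (1 - κ) := by
      rw [← Finset.mul_sum, div_eq_mul_inv]
      gcongr
      rw [← tsum_geometric_of_lt_one hκ0.le hκ1]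
      exact (summable_geometric_of_lt_one hκ0.le hκ1).sum_le_tsum _ fun i _ => by positivity
    have hval : (2 ^ d + 1) * (C₁ / (1 - κ)) = c₁ / 2 := by
      rw [hC₁]; field_simp
    rcases Nat.eq_zero_or_pos i with hi | hi
    · rw [hi, Finset.sum_range_zero, mul_zero] at h4
      linarith
    · have h5 : ∑ j ∈ Finset.range i, Fav i₀ M ((1 / 2) ^ (k + j)) T b x <
          ∑ j ∈ Finset.range i, C₁ * κ ^ j :=
        Finset.sum_lt_sum_of_nonempty (Finset.nonempty_range_iff.2 hi.ne')
          fun j hj => hcon j hx (Finset.mem_range.1 hj)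
      have h6 : (2 ^ d + 1) * ∑ j ∈ Finset.range i, Fav i₀ M ((1 / 2) ^ (k + j)) T b x <
          (2 ^ d + 1) * (C₁ / (1 - κ)) := by
        gcongr
        exact h5.trans_le hgeom
      linarith
  have hlC := lC_nonneg hM1 hσd hτd
  have hlev : ∀ j : ℕ, content (τ ^ 2)
      {x ∈ G | j < i ∧ C₁ * κ ^ j ≤ Fav i₀ M ((1 / 2) ^ (k + j)) T b x} ≤
      ENNReal.ofReal (lC d M (σ ^ 2) (τ ^ 2) / C₁ * (κ ^ 2) ^ k * κ ^ j) := by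
    intro j
    by_cases hj : j < i
    · refine (content_level_le (i₀ := i₀) hM1 hσ hτ hσd hτd (k + j) hTd hb
        (fun l hl => hball l (by omega)) htot (fun x hx => hE hx.1.1)
        (c := C₁ * κ ^ j) (by positivity) fun x hx => hx.2.2).trans (le_of_eq ?_)
      congr 1
      rw [← hκ, pow_add, ← pow_mul κ 2 j]
      field_simp
      ring
    · have : {x ∈ G | j < i ∧ C₁ * κ ^ j ≤ Fav i₀ M ((1 / 2) ^ (k + j)) T b x} = ∅ := by
        ext x; simp [hj]
      rw [this, content_empty]
      exact zero_le
  refine (content_mono hcover).trans ((content_iUnion_le _).trans ((ENNReal.tsum_le_tsum hlev).trans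
    (le_of_eq ?_)))
  rw [← ENNReal.ofReal_tsum_of_nonneg (fun j => by positivity)
    ((summable_geometric_of_lt_one hκ0.le hκ1).mul_left _), tsum_mul_left,
    tsum_geometric_of_lt_one hκ0.le hκ1]
  congr 1
  field_simp

lemma slope_cont {x : Fin (d + 1) → ℝ} {K : Set (Fin (d + 1) → ℝ)} {c : ℝ} (hc : 0 < c)
    (hxc : ∀ y ∈ K, c ≤ |(x - y) i₀|) : ContinuousOn (slope i₀ x) K := by
  unfold slope
  have h1 : Continuous fun y : Fin (d + 1) → ℝ => (x - y) i₀ := by fun_prop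
  refine ContinuousOn.smul (h1.continuousOn.inv₀ fun y hy => ?_) ?_
  · exact abs_pos.1 (hc.trans_le (hxc y hy))
  · exact ((tl_cont i₀).comp (continuous_const.sub continuous_id)).continuousOn

/-- If every point of `E` sees the compact set `K` in a null set of slopes, then `E` has content
zero. -/
lemma content_eq_zero {σ τ c R : ℝ} (hσ : 0 < σ) (hτ : 0 < τ) (hτ1 : τ ≤ 1)
    (hσd : (1 / 2) ^ (d + 1) < σ ^ 2) (hτd : (1 / 2) ^ d < τ ^ 2) (hκ : 2 ^ d * (σ * τ) < 1)
    {K E : Set (Fin (d + 1) → ℝ)} {y₀ e₀ : Fin (d + 1) → ℝ} (hK : K ⊆ closedBall y₀ (1 / 2))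
    (hE : E ⊆ closedBall e₀ (1 / 2)) (hc : 0 < c) (hR : 0 < R)
    (hEc : ∀ x ∈ E, ∀ y ∈ K, c ≤ |(x - y) i₀|) (hER : ∀ x ∈ E, ∀ y ∈ K, ‖x - y‖ ≤ R)
    (hKc : IsCompact K) (hKpos : 0 < content (σ ^ 2) K)
    (hnull : ∀ x ∈ E, volume (slope i₀ x '' K) = 0) : content (τ ^ 2) E = 0 := by
  have hKfin : content (σ ^ 2) K ≠ ⊤ := by
    obtain ⟨T, -, b, -, -, h, -⟩ := frostman (θ := σ ^ 2) (by positivity) 0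
      (hK.trans (closedBall_subset_closedBall (by norm_num : (1 / 2 : ℝ) ≤ 1)))
    exact (h.trans_lt ENNReal.ofReal_lt_top).ne
  have hc₀ : 0 < (content (σ ^ 2) K).toReal := ENNReal.toReal_pos hKpos.ne' hKfin
  set κ := √(2 ^ d * (σ * τ)) with hκdef
  have hκ0 : 0 < κ := by positivity
  have hκ2 : κ ^ 2 = 2 ^ d * (σ * τ) := Real.sq_sqrt (by positivity)
  have hκ1 : κ < 1 := by
    rw [hκdef, Real.sqrt_lt' one_pos]
    simpa using hκ
  set c₁ := (R ^ d)⁻¹ * (content (σ ^ 2) K).toReal with hc₁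
  have hc₁0 : 0 < c₁ := by positivity
  have ht := tentInt_pos d
  have hMpos : 0 < R / c + 2 := by positivity
  have hbound : ∀ k : ℕ, 2 * (1 / 2) ^ k / c ≤ 1 → content (τ ^ 2) E ≤
      ENNReal.ofReal (lC d (R / c + 2) (σ ^ 2) (τ ^ 2) / (c₁ / (2 * (2 ^ d + 1)) * (1 - κ)) /
        (1 - κ) * (κ ^ 2) ^ k) := by
    intro k hk
    set B := (R / c + 2) * (3 ^ (d + 1) * ((tentInt d)⁻¹ * (2 ^ d) ^ k)) with hB
    have hB0 : 0 < B := by positivity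
    have hg0 : 0 < c₁ / 2 / B := by positivity
    -- these sets increase to `E` because the slopes form compact null sets
    set G : ℕ → Set (Fin (d + 1) → ℝ) :=
      fun i => {x ∈ E | volume (nbd i₀ c K (k + i) x) ≤ ENNReal.ofReal (c₁ / 2 / B)} with hG
    have hmono : Monotone G := by
      intro i i' hii x hx
      refine ⟨hx.1, (measure_mono ?_).trans hx.2⟩
      refine cthickening_mono ?_ _
      have : (1 / 2 : ℝ) ^ (k + i') ≤ (1 / 2) ^ (k + i) :=
        pow_le_pow_of_le_one (by norm_num) (by norm_num) (by omega)
      gcongr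
    have hunion : E ⊆ ⋃ i, G i := by
      intro x hx
      have hcpt : IsCompact (slope i₀ x '' K) := hKc.image_of_continuousOn (slope_cont hc (hEc x hx))
      have h1 := tendsto_measure_cthickening_of_isCompact (μ := volume) hcpt
      rw [hnull x hx] at h1
      have h2 : Filter.Tendsto (fun i : ℕ => 2 * (1 / 2 : ℝ) ^ (k + i) / c) Filter.atTop
          (nhds 0) := by
        have h3 : Filter.Tendsto (fun i : ℕ => (1 / 2 : ℝ) ^ (i + k)) Filter.atTop (nhds 0) :=
          (Filter.tendsto_add_atTop_iff_nat k).2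
            (tendsto_pow_atTop_nhds_zero_of_lt_one (by norm_num) (by norm_num))
        simpa [add_comm] using (h3.const_mul 2).div_const c
      have h4 := (h1.comp h2).eventually_le_const
        (ENNReal.ofReal_pos.2 hg0)
      obtain ⟨i, hi⟩ := h4.exists
      exact Set.mem_iUnion.2 ⟨i, hx, hi⟩
    refine (content_mono hunion).trans
      ((content_iUnion_eq (by positivity) (pow_le_one₀ hτ.le hτ1) G hmono).trans (iSup_le fun i => ?_))
    exact content_small_nbd hσ hτ hσd hτd hκ0 hκ2 hκ1 hK hE hc hR hEc hER hc₁0 hc₁ rfl k i hk hg0.le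
      (by rw [mul_div_cancel₀ _ hB0.ne'])
  have hlim : Filter.Tendsto (fun k : ℕ => ENNReal.ofReal (lC d (R / c + 2) (σ ^ 2) (τ ^ 2) /
      (c₁ / (2 * (2 ^ d + 1)) * (1 - κ)) / (1 - κ) * (κ ^ 2) ^ k)) Filter.atTop (nhds 0) := by
    rw [← ENNReal.ofReal_zero]
    refine ENNReal.tendsto_ofReal ?_
    have h1 : Filter.Tendsto (fun k : ℕ => (κ ^ 2) ^ k) Filter.atTop (nhds 0) :=
      tendsto_pow_atTop_nhds_zero_of_lt_one (by positivity) (by rw [hκ2]; exact hκ)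
    simpa using h1.const_mul _
  have hev : ∀ᶠ k : ℕ in Filter.atTop, 2 * (1 / 2 : ℝ) ^ k / c ≤ 1 := by
    have h1 : Filter.Tendsto (fun k : ℕ => 2 * (1 / 2 : ℝ) ^ k / c) Filter.atTop (nhds 0) := by
      simpa using ((tendsto_pow_atTop_nhds_zero_of_lt_one (r := (1 / 2 : ℝ)) (by norm_num)
        (by norm_num)).const_mul 2).div_const c
    exact h1.eventually_le_const one_pos
  refine le_antisymm (ge_of_tendsto hlim (hev.mono hbound)) zero_le

end

/-! ### Dimension of the exceptional set -/

section
variable {d : ℕ}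

/-- Central projection to a hyperplane maps null sets to null sets, so a set seen in a null set of
directions is also seen in a null set of slopes. -/
lemma slope_null {i₀ : Fin (d + 1)} {P : Set (Fin (d + 1) → ℝ)} (hP : μH[(d : ℝ)] P = 0)
    {K : Set (Fin (d + 1) → ℝ)} {x : Fin (d + 1) → ℝ} {N δ : ℝ} (hδ : 0 < δ)
    (h : ∀ y ∈ K, ∃ ρ : ℝ, 0 < ρ ∧ ρ • (y - x) ∈ P ∧ ‖ρ • (y - x)‖ ≤ N ∧
      δ ≤ |(ρ • (y - x)) i₀|) : volume (slope i₀ x '' K) = 0 := by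
  set g : (Fin (d + 1) → ℝ) → (Fin d → ℝ) := fun z => (z i₀)⁻¹ • tl i₀ z with hg
  set U : Set (Fin (d + 1) → ℝ) := {z | ‖z‖ ≤ N ∧ δ ≤ |z i₀|} with hU
  rcases K.eq_empty_or_nonempty with rfl | ⟨y0, hy0⟩
  · simp
  have hN : 0 ≤ N := by
    obtain ⟨ρ, -, -, h1, -⟩ := h y0 hy0
    exact (norm_nonneg _).trans h1
  have hlip : LipschitzOnWith (Real.toNNReal (δ⁻¹ + δ⁻¹ * δ⁻¹ * N)) g U := by
    refine LipschitzOnWith.of_dist_le_mul fun z hz z' hz' => ?_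
    rw [Real.coe_toNNReal _ (by positivity), dist_eq_norm, dist_eq_norm]
    have hz0 : 0 < |z i₀| := hδ.trans_le hz.2
    have hz0' : 0 < |z' i₀| := hδ.trans_le hz'.2
    have e : g z - g z' = (z i₀)⁻¹ • tl i₀ (z - z') +
        ((z i₀)⁻¹ * (z' i₀)⁻¹ * (z' - z) i₀) • tl i₀ z' := by
      have h1 : (z i₀)⁻¹ * (z' i₀)⁻¹ * (z' - z) i₀ = (z i₀)⁻¹ - (z' i₀)⁻¹ := by
        have := abs_pos.1 hz0
        have := abs_pos.1 hz0'
        rw [Pi.sub_apply]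
        field_simp
      rw [h1, tl_sub, smul_sub, sub_smul]
      simp only [hg]
      abel
    rw [e]
    refine (norm_add_le _ _).trans ?_
    have h1 : |z i₀|⁻¹ ≤ δ⁻¹ := inv_anti₀ hδ hz.2
    have h2 : |z' i₀|⁻¹ ≤ δ⁻¹ := inv_anti₀ hδ hz'.2
    have h3 : |(z' - z) i₀| ≤ ‖z - z'‖ := by
      rw [norm_sub_rev]; exact norm_le_pi_norm (z' - z) i₀
    rw [norm_smul, norm_smul, Real.norm_eq_abs, Real.norm_eq_abs, abs_mul, abs_mul, abs_inv,
      abs_inv]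
    calc |z i₀|⁻¹ * ‖tl i₀ (z - z')‖ + |z i₀|⁻¹ * |z' i₀|⁻¹ * |(z' - z) i₀| * ‖tl i₀ z'‖
        ≤ δ⁻¹ * ‖z - z'‖ + δ⁻¹ * δ⁻¹ * ‖z - z'‖ * N := by
          gcongr
          · exact norm_tl_le _ _
          · exact (norm_tl_le _ _).trans hz'.1
      _ = _ := by ring
  have hsub : slope i₀ x '' K ⊆ g '' (P ∩ U) := by
    rintro _ ⟨y, hy, rfl⟩
    obtain ⟨ρ, hρ, h1, h2, h3⟩ := h y hy
    refine ⟨ρ • (y - x), ⟨h1, h2, h3⟩, ?_⟩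
    have e1 : (ρ • (y - x)) i₀ = -ρ * (x - y) i₀ := by
      simp only [Pi.smul_apply, Pi.sub_apply, smul_eq_mul]; ring
    have e2 : tl i₀ (ρ • (y - x)) = -ρ • tl i₀ (x - y) := by
      ext k
      simp only [tl, Pi.smul_apply, Pi.sub_apply, smul_eq_mul]; ring
    simp only [hg, slope]
    rw [e1, e2, smul_smul, mul_inv, mul_right_comm, inv_mul_cancel₀ (neg_ne_zero.2 hρ.ne'),
      one_mul]
  have hvol : (μH[(d : ℝ)] : Measure (Fin d → ℝ)) = volume := by
    have := hausdorffMeasure_pi_real (ι := Fin d)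
    rwa [Fintype.card_fin] at this
  refine measure_mono_null hsub ?_
  rw [← hvol]
  refine le_antisymm (((hlip.mono Set.inter_subset_right).hausdorffMeasure_image_le
    (Nat.cast_nonneg d)).trans ?_) zero_le
  rw [measure_mono_null Set.inter_subset_left hP, mul_zero]

lemma content_pos_of_lt_dimH {n : ℕ} {s : NNReal} (hs : 0 < s) {S : Set (Fin n → ℝ)}
    (h : (s : ℝ≥0∞) < dimH S) : 0 < content ((2 : ℝ) ^ (-(s : ℝ))) S := by
  rw [pos_iff_ne_zero]
  intro h0
  have h1 := hausdorff_eq_zero (t := (s : ℝ)) (by exact_mod_cast hs) h0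
  rw [hausdorffMeasure_of_lt_dimH h] at h1
  exact ENNReal.top_ne_zero h1

/-- Two sets with large dimensions cannot be such that the first is seen in a null set of directions
from all points of the second. The null set `P` need not lie in the unit sphere of the sup norm, as
the points `ρ • (y - x)` are only required to have norms between two bounds; this admits the images
of Euclidean unit vectors under a change of norm. -/
lemma no_null_projections {A E : Set (Fin (d + 1) → ℝ)} (hA : MeasurableSet A) {s t : NNReal}
    (hs : (d : ℝ) < s) (hs' : (s : ℝ) < d + 1) (ht : 0 < t) (ht' : (t : ℝ) < d)
    (hst : 2 * (d : ℝ) < s + t) (hAs : (s : ℝ≥0∞) < dimH A) (hEt : (t : ℝ≥0∞) < dimH E)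
    {m N : ℝ} (hm : 0 < m)
    (hnull : ∀ x ∈ E, ∃ P : Set (Fin (d + 1) → ℝ), μH[(d : ℝ)] P = 0 ∧ ∀ y ∈ A, y ≠ x →
      ∃ ρ : ℝ, 0 < ρ ∧ ρ • (y - x) ∈ P ∧ m ≤ ‖ρ • (y - x)‖ ∧ ‖ρ • (y - x)‖ ≤ N) : False := by
  -- points at which `E` and `A` have large local dimension, differing in the coordinate `i₀`
  obtain ⟨e₀, -, he₀⟩ := exists_mem_nhdsWithin_lt_dimH_of_lt_dimH hEt
  have hA' : (s : ℝ≥0∞) < dimH (A \ {e₀}) := by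
    have h1 : dimH A ≤ max (dimH (A \ {e₀})) (dimH {e₀}) := by
      rw [← dimH_union]
      exact dimH_mono fun y hy => by
        by_cases h : y = e₀
        · exact Or.inr h
        · exact Or.inl ⟨hy, h⟩
    rw [dimH_singleton, max_eq_left zero_le] at h1
    exact hAs.trans_le h1
  obtain ⟨y₀, hy₀, hloc⟩ := exists_mem_nhdsWithin_lt_dimH_of_lt_dimH hA'
  have hne : y₀ ≠ e₀ := hy₀.2
  obtain ⟨i₀, hi₀⟩ := Function.ne_iff.1 hne
  set Δ := |e₀ i₀ - y₀ i₀| with hΔ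
  have hΔ0 : 0 < Δ := abs_pos.2 (sub_ne_zero.2 hi₀.symm)
  set r := min (1 / 2) (Δ / 4) with hr
  have hr0 : 0 < r := by positivity
  have hr1 : r ≤ 1 / 2 := min_le_left _ _
  have hr2 : r ≤ Δ / 4 := min_le_right _ _
  set E' := E ∩ closedBall e₀ r with hE'
  set A' := (A \ {e₀}) ∩ closedBall y₀ r with hA'def
  have hE't : (t : ℝ≥0∞) < dimH E' := he₀ _ (inter_mem_nhdsWithin _ (closedBall_mem_nhds _ hr0))
  have hA's : (s : ℝ≥0∞) < dimH A' := hloc _ (inter_mem_nhdsWithin _ (closedBall_mem_nhds _ hr0))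
  have hA'm : MeasurableSet A' :=
    (hA.diff (measurableSet_singleton _)).inter measurableSet_closedBall
  have hs0 : 0 < (s : ℝ) := lt_of_le_of_lt (Nat.cast_nonneg d) hs
  have ht0 : 0 < (t : ℝ) := by exact_mod_cast ht
  have hposA := content_pos_of_lt_dimH (by exact_mod_cast hs0) hA's
  have hposE := content_pos_of_lt_dimH ht hE't
  obtain ⟨K, hKA, hKc, hKpos⟩ := exists_compact_content_pos (by positivity)
    (Real.rpow_le_one_of_one_le_of_nonpos (by norm_num) (by linarith)) hA'm.analyticSet hposA
  have hgeo : ∀ x ∈ E', ∀ y ∈ A', Δ / 2 ≤ |(x - y) i₀| := by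
    intro x hx y hy
    have h1 : |x i₀ - e₀ i₀| ≤ r := by
      rw [← Real.dist_eq]; exact (dist_le_pi_dist x e₀ i₀).trans hx.2
    have h2 : |y i₀ - y₀ i₀| ≤ r := by
      rw [← Real.dist_eq]; exact (dist_le_pi_dist y y₀ i₀).trans hy.2
    have h3 : Δ ≤ |(x - y) i₀| + (|x i₀ - e₀ i₀| + |y i₀ - y₀ i₀|) := by
      rw [Pi.sub_apply, hΔ, show e₀ i₀ - y₀ i₀ =
        (x i₀ - y i₀) + (-(x i₀ - e₀ i₀) + (y i₀ - y₀ i₀)) by ring]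
      refine (abs_add_le _ _).trans ?_
      gcongr
      refine (abs_add_le _ _).trans ?_
      rw [abs_neg]
    linarith
  have hgeoR : ∀ x ∈ E', ∀ y ∈ A', ‖x - y‖ ≤ ‖e₀ - y₀‖ + 1 := by
    intro x hx y hy
    have h1 : ‖x - e₀‖ ≤ r := by rw [← dist_eq_norm]; exact hx.2
    have h2 : ‖y - y₀‖ ≤ r := by rw [← dist_eq_norm]; exact hy.2
    have h3 : x - y = (e₀ - y₀) + ((x - e₀) - (y - y₀)) := by abel
    rw [h3]
    refine (norm_add_le _ _).trans ?_
    have := norm_sub_le (x - e₀) (y - y₀)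
    linarith
  have hsq : ∀ a : ℝ, ((2 : ℝ) ^ (-a / 2)) ^ 2 = 2 ^ (-a) := by
    intro a
    rw [← Real.rpow_natCast, ← Real.rpow_mul (by norm_num)]
    congr 1
    push_cast
    ring
  have hhalf : ∀ k : ℕ, (1 / 2 : ℝ) ^ k = 2 ^ (-(k : ℝ)) := by
    intro k
    rw [Real.rpow_neg (by norm_num), Real.rpow_natCast, one_div, inv_pow]
  have hzero : content (((2 : ℝ) ^ (-(t : ℝ) / 2)) ^ 2) E' = 0 := by
    refine content_eq_zero (i₀ := i₀) (σ := (2 : ℝ) ^ (-(s : ℝ) / 2)) (K := K) (c := Δ / 2)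
      (R := ‖e₀ - y₀‖ + 1) (y₀ := y₀) (e₀ := e₀) (by positivity) (by positivity) ?_ ?_ ?_ ?_ ?_ ?_
      (by positivity) (by positivity) (fun x hx y hy => hgeo x hx y (hKA hy))
      (fun x hx y hy => hgeoR x hx y (hKA hy)) hKc ?_ ?_
    · exact Real.rpow_le_one_of_one_le_of_nonpos (by norm_num) (by linarith)
    · rw [hsq, hhalf]
      exact Real.rpow_lt_rpow_of_exponent_lt (by norm_num) (by push_cast; linarith)
    · rw [hsq, hhalf]
      exact Real.rpow_lt_rpow_of_exponent_lt (by norm_num) (by linarith)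
    · rw [← Real.rpow_natCast, ← Real.rpow_add (by norm_num), ← Real.rpow_add (by norm_num)]
      exact Real.rpow_lt_one_of_one_lt_of_neg (by norm_num) (by linarith)
    · exact fun y hy => closedBall_subset_closedBall hr1 (hKA hy).2
    · exact fun x hx => closedBall_subset_closedBall hr1 hx.2
    · rwa [hsq]
    · intro x hx
      obtain ⟨P, hP, hPA⟩ := hnull x hx.1
      refine slope_null (δ := m * (Δ / 2) / (‖e₀ - y₀‖ + 1)) (N := N) hP (by positivity)
        fun y hy => ?_
      have hg := hgeo x hx y (hKA hy)
      have hgR := hgeoR x hx y (hKA hy)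
      have hyx : y ≠ x := by
        rintro rfl
        simp only [sub_self, Pi.zero_apply, abs_zero] at hg
        linarith
      obtain ⟨ρ, hρ, h1, h2, h3⟩ := hPA y (hKA hy).1.1 hyx
      refine ⟨ρ, hρ, h1, h3, ?_⟩
      rw [norm_smul, Real.norm_of_nonneg hρ.le, norm_sub_rev] at h2
      rw [Pi.smul_apply, smul_eq_mul, abs_mul, abs_of_pos hρ, ← neg_sub x y, Pi.neg_apply, abs_neg,
        div_le_iff₀ (by positivity)]
      calc m * (Δ / 2) ≤ (ρ * ‖x - y‖) * |(x - y) i₀| := by gcongr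
        _ ≤ (ρ * (‖e₀ - y₀‖ + 1)) * |(x - y) i₀| := by gcongr
        _ = _ := by ring
  rw [hsq] at hzero
  exact hposE.ne' hzero

lemma dimH_exceptional_le {A E : Set (Fin (d + 1) → ℝ)} (hA : MeasurableSet A)
    (hdim : (d : ℝ≥0∞) < dimH A) {m N : ℝ} (hm : 0 < m)
    (hnull : ∀ x ∈ E, ∃ P : Set (Fin (d + 1) → ℝ), μH[(d : ℝ)] P = 0 ∧ ∀ y ∈ A, y ≠ x →
      ∃ ρ : ℝ, 0 < ρ ∧ ρ • (y - x) ∈ P ∧ m ≤ ‖ρ • (y - x)‖ ∧ ‖ρ • (y - x)‖ ≤ N)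
    (hd : 0 < d) : dimH E ≤ 2 * (d : ℝ≥0∞) - dimH A := by
  have hAle : dimH A ≤ (d + 1 : ℕ) := by
    rw [← Real.dimH_univ_pi_fin]; exact dimH_mono (Set.subset_univ _)
  have hAtop : dimH A ≠ ⊤ := (hAle.trans_lt (ENNReal.natCast_lt_top _)).ne
  by_contra! hcon
  -- truncated subtraction is harmless here, since `dimH A ≤ d + 1 ≤ 2 d`
  have hβ : 2 * (d : ℝ≥0∞) - dimH A < d := by
    refine (ENNReal.sub_lt_iff_lt_right hAtop ?_).2 ?_
    · refine hAle.trans ?_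
      exact_mod_cast (by omega : d + 1 ≤ 2 * d)
    · rw [two_mul]
      exact (ENNReal.add_lt_add_iff_left (ENNReal.natCast_ne_top d)).2 hdim
  obtain ⟨t, ht1, ht2⟩ := ENNReal.lt_iff_exists_nnreal_btwn.1 (lt_min hcon hβ)
  have htE : (t : ℝ≥0∞) < dimH E := ht2.trans_le (min_le_left _ _)
  have htd : (t : ℝ≥0∞) < d := ht2.trans_le (min_le_right _ _)
  have h1 : 2 * (d : ℝ≥0∞) - t < dimH A := by
    have h2 : 2 * (d : ℝ≥0∞) < t + dimH A := by
      by_contra! h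
      exact absurd (ENNReal.le_sub_of_add_le_right hAtop h) (not_le.2 ht1)
    exact ENNReal.sub_lt_of_lt_add (htd.le.trans (by rw [two_mul]; exact le_self_add))
      (by rwa [add_comm])
  obtain ⟨s, hs1, hs2⟩ := ENNReal.lt_iff_exists_nnreal_btwn.1 h1
  have htd' : (t : ℝ) < d := by exact_mod_cast htd
  have hst : 2 * (d : ℝ) < s + t := by
    have h3 : 2 * (d : ℝ≥0∞) < s + t := by
      by_contra! h
      exact absurd (ENNReal.le_sub_of_add_le_right ENNReal.coe_ne_top h) (not_le.2 hs1)
    exact_mod_cast h3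
  refine no_null_projections hA (s := s) (t := t) (by linarith) ?_ ?_ htd' hst hs2 htE hm hnull
  · exact_mod_cast hs2.trans_le hAle
  · have : (0 : ℝ≥0∞) < t := lt_of_le_of_lt zero_le ht1
    exact_mod_cast this

end

/-- Every set has a Borel hull of the same Hausdorff dimension. -/
lemma exists_borel_hull {X : Type*} [MetricSpace X] [MeasurableSpace X] [BorelSpace X] (E : Set X)
    (hE : dimH E ≠ ⊤) : ∃ B, MeasurableSet B ∧ E ⊆ B ∧ dimH B ≤ dimH E := by
  set s : ℕ → NNReal := fun k => (dimH E).toNNReal + 1 / (k + 1) with hs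
  refine ⟨⋂ k, toMeasurable μH[s k] E, MeasurableSet.iInter fun k => measurableSet_toMeasurable _ _,
    Set.subset_iInter fun k => subset_toMeasurable _ _, ?_⟩
  have h1 : ∀ k, dimH (⋂ k, toMeasurable μH[s k] E) ≤ s k := by
    intro k
    refine dimH_le_of_hausdorffMeasure_ne_top ?_
    have h2 : μH[s k] E = 0 := by
      refine hausdorffMeasure_of_dimH_lt ?_
      rw [← ENNReal.coe_toNNReal hE, ENNReal.coe_lt_coe]
      exact lt_add_of_pos_right _ (by positivity)
    have h3 : μH[s k] (⋂ k, toMeasurable μH[s k] E) = 0 :=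
      measure_mono_null (Set.iInter_subset _ k) (by rw [measure_toMeasurable, h2])
    rw [h3]
    exact ENNReal.zero_ne_top
  refine ENNReal.le_of_forall_pos_le_add fun ε hε _ => ?_
  obtain ⟨k, hk⟩ := exists_nat_one_div_lt hε
  refine (h1 k).trans ?_
  rw [hs, ENNReal.coe_add, ENNReal.coe_toNNReal hE]
  gcongr

end RadProj

/-- Orponen's radial projection theorem: if `A ⊆ ℝⁿ` is a Borel set with
`dim A > n - 1`, then there is a Borel set `B ⊆ ℝⁿ` with
`dim B ≤ 2(n-1) - dim A` such that for every `x ∉ B`, the radial projection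
`π_x(A \ {x})` has positive `H^{n-1}` measure, where `π_x(y) = (y-x)/|y-x|`. -/
theorem orponen_radial_projections (n : ℕ) (hn : 2 ≤ n)
    (A : Set (EuclideanSpace ℝ (Fin n))) (hA : MeasurableSet A)
    (hdim : (n : ℝ≥0∞) - 1 < dimH A) :
    ∃ B : Set (EuclideanSpace ℝ (Fin n)), MeasurableSet B ∧
      dimH B ≤ 2 * ((n : ℝ≥0∞) - 1) - dimH A ∧
      ∀ x ∉ B,
        0 < μH[(n : ℝ) - 1]
          ((fun y => ‖y - x‖⁻¹ • (y - x)) '' (A \ {x})) := by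
  obtain ⟨d, rfl⟩ : ∃ d, n = d + 1 := ⟨n - 1, by omega⟩
  have hd : 0 < d := by omega
  have e1 : ((d + 1 : ℕ) : ℝ≥0∞) - 1 = d := by
    push_cast
    exact ENNReal.add_sub_cancel_right ENNReal.one_ne_top
  have e2 : ((d + 1 : ℕ) : ℝ) - 1 = d := by push_cast; ring
  rw [e1] at hdim ⊢
  rw [e2]
  -- the exceptional set
  set E : Set (EuclideanSpace ℝ (Fin (d + 1))) :=
    {x | μH[(d : ℝ)] ((fun y => ‖y - x‖⁻¹ • (y - x)) '' (A \ {x})) = 0} with hE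
  set L := EuclideanSpace.equiv (Fin (d + 1)) ℝ with hL
  have hdimE : dimH E ≤ 2 * (d : ℝ≥0∞) - dimH A := by
    rw [← L.dimH_image E, ← L.dimH_image A]
    have hLA : MeasurableSet (L '' A) := by
      rw [L.image_eq_preimage_symm]
      exact L.symm.continuous.measurable hA
    have hinv : ∀ u, ‖u‖ ≤ ‖(L.symm : (Fin (d + 1) → ℝ) →L[ℝ] EuclideanSpace ℝ (Fin (d + 1)))‖ *
        ‖L u‖ := by
      intro u
      have := (L.symm : (Fin (d + 1) → ℝ) →L[ℝ] EuclideanSpace ℝ (Fin (d + 1))).le_opNorm (L u)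
      simpa using this
    set Q := ‖(L.symm : (Fin (d + 1) → ℝ) →L[ℝ] EuclideanSpace ℝ (Fin (d + 1)))‖ with hQ
    have hQ0 : 0 ≤ Q := norm_nonneg _
    refine RadProj.dimH_exceptional_le hLA (by rwa [L.dimH_image]) (m := (Q + 1)⁻¹)
      (N := ‖(L : EuclideanSpace ℝ (Fin (d + 1)) →L[ℝ] (Fin (d + 1) → ℝ))‖) (by positivity) ?_ hd
    rintro _ ⟨x, hx, rfl⟩
    refine ⟨L '' ((fun y => ‖y - x‖⁻¹ • (y - x)) '' (A \ {x})), ?_, ?_⟩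
    · refine le_antisymm ((L.lipschitz.hausdorffMeasure_image_le (Nat.cast_nonneg d) _).trans ?_)
        zero_le
      rw [show μH[(d : ℝ)] ((fun y => ‖y - x‖⁻¹ • (y - x)) '' (A \ {x})) = 0 from hx, mul_zero]
    · rintro _ ⟨y, hy, rfl⟩ hyx
      have hne : y ≠ x := fun h => hyx (by rw [h])
      have hpos : 0 < ‖y - x‖ := norm_pos_iff.2 (sub_ne_zero.2 hne)
      have e3 : ‖y - x‖⁻¹ • (L y - L x) = L (‖y - x‖⁻¹ • (y - x)) := by
        rw [map_smul, map_sub]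
      have hone : ‖‖y - x‖⁻¹ • (y - x)‖ = 1 := by
        rw [norm_smul, norm_inv, norm_norm, inv_mul_cancel₀ hpos.ne']
      refine ⟨‖y - x‖⁻¹, by positivity, ?_, ?_, ?_⟩
      · rw [e3]
        exact Set.mem_image_of_mem _ ⟨y, ⟨hy, hne⟩, rfl⟩
      · rw [e3, inv_le_iff_one_le_mul₀ (by positivity), ← hone]
        refine (hinv _).trans ?_
        rw [mul_comm]
        gcongr
        linarith
      · rw [e3]
        refine ((L : EuclideanSpace ℝ (Fin (d + 1)) →L[ℝ] (Fin (d + 1) → ℝ)).le_opNorm _).trans ?_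
        rw [hone, mul_one]
  obtain ⟨B, hB, hEB, hdimB⟩ := RadProj.exists_borel_hull E
    (hdimE.trans_lt (tsub_le_self.trans_lt (by
      exact_mod_cast ENNReal.natCast_lt_top (2 * d)))).ne
  refine ⟨B, hB, hdimB.trans hdimE, fun x hx => ?_⟩
  rw [pos_iff_ne_zero]
  exact fun h => hx (hEB h)
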